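/- arXiv:1607.05772 — 4 statements merged into one kernel-verified Lean document; each statement's English description precedes it below -/
import Mathlib

section
/- Let K be an algebraically closed field of characteristic 0, let q ∈ {4, 5, 7}, and let G ⊆ PGL₃(K) be a subgroup isomorphic to the cyclic group ℤ/qℤ. Then there exist φ ∈ PGL₃(K) and a primitive q-th root of unity ζ ∈ K such that: if q = 4, then φ⁻¹Gφ is generated by [diag(1,ζ,1)] or by [diag(1,ζ,−1)]; if q = 5, then φ⁻¹Gφ is generated by [diag(1,ζ,1)] or by [diag(1,ζ,ζ³)]; if q = 7, then φ⁻¹Gφ is generated by [diag(1,ζ,1)], by [diag(1,ζ,ζ²)], or by [diag(1,ζ,ζ³)]. -/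
open Matrix MvPolynomial
open scoped Classical

noncomputable section

/-- `PGL₃(K)`: the quotient of `GL₃(K)` by its center (the nonzero scalar matrices). -/
abbrev PGL3 (K : Type*) [Field K] : Type _ :=
  GL (Fin 3) K ⧸ Subgroup.center (GL (Fin 3) K)

/-- The class in `PGL₃(K)` of a matrix (sent to `1` if the matrix is not invertible). -/
def toPGL3 {K : Type*} [Field K] (M : Matrix (Fin 3) (Fin 3) K) : PGL3 K :=
  if h : M.det ≠ 0 then
    QuotientGroup.mk (Matrix.GeneralLinearGroup.mkOfDetNeZero M h) else 1

/-- The automorphism group (as a set of classes in `PGL₃(K)`) of a polynomial self-map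
`F` of `K³`: the classes `[M]` such that `F(M·v) = c·M·F(v)` for some `c ≠ 0` and all `v`. -/
def AutQ {K : Type*} [Field K] (F : (Fin 3 → K) → (Fin 3 → K)) : Set (PGL3 K) :=
  {φ | ∃ M : GL (Fin 3) K, (QuotientGroup.mk M : PGL3 K) = φ ∧
    ∃ c : K, c ≠ 0 ∧ ∀ v : Fin 3 → K,
      F ((M : Matrix (Fin 3) (Fin 3) K) *ᵥ v) = c • ((M : Matrix (Fin 3) (Fin 3) K) *ᵥ F v)}

/-- Two polynomial self-maps of `K³` are `PGL₃(K)`-conjugate. -/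
def PGLConj {K : Type*} [Field K] (F F' : (Fin 3 → K) → (Fin 3 → K)) : Prop :=
  ∃ (M : Matrix (Fin 3) (Fin 3) K) (c : K), M.det ≠ 0 ∧ c ≠ 0 ∧
    ∀ v : Fin 3 → K, F (M *ᵥ v) = c • (M *ᵥ F' v)

/-- The `n`-fold composite of the polynomial self-map of `K³` whose coordinates are the
polynomials `P 0, P 1, P 2`, as a triple of polynomials (the `0`-th iterate is the identity). -/
def iterComp {K : Type*} [CommSemiring K] (P : Fin 3 → MvPolynomial (Fin 3) K) :
    ℕ → Fin 3 → MvPolynomial (Fin 3) K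
  | 0 => fun i => MvPolynomial.X i
  | n + 1 => fun i => MvPolynomial.aeval (iterComp P n) (P i)

/-! An element of order `q` of `PGL(3, K)` lifts to a matrix `g` with `g ^ q = 1` as soon as `q`
is coprime to `3`: if `g ^ q = u`, then `det g ^ q = u ^ 3`, so `u` is a `q`-th power and can be
divided out. When `K` contains a primitive `q`-th root of unity `ζ`, Lagrange interpolation at its
powers diagonalizes `g` as `diag(ζ ^ a₀, ζ ^ a₁, ζ ^ a₂)` with weights `aᵢ` in `ZMod q`. Permuting
the coordinates, changing the generator and rescaling the matrix act on weights by permutations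
and by affine maps `x ↦ u x + t`. If `q` is a prime power, some difference of weights is a unit,
which normalizes the weights to `(0, 1, l)`. The identifications `l ∼ 1 - l ∼ l⁻¹` that remain
leave `l ∈ {0, 2}`, `{0, 3}`, `{0, 2, 3}` for `q = 4, 5, 7`. -/

open Matrix.ProjGenLinGroup
open scoped MatrixGroups

section Group

theorem exists_eq_pow_of_pow_eq_pow_of_coprime {Γ : Type*} [CommGroup Γ] {m n : ℕ}
    (h : m.Coprime n) {x y : Γ} (hxy : x ^ m = y ^ n) : ∃ z, y = z ^ m := by
  have bezout : (1 : ℤ) = m * m.gcdA n + n * m.gcdB n := by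
    rw [← Nat.gcd_eq_gcd_ab, h.gcd_eq_one, Nat.cast_one]
  refine ⟨y ^ m.gcdA n * x ^ m.gcdB n, ?_⟩
  calc
    y = y ^ (m * m.gcdA n) * (y ^ n) ^ m.gcdB n := by
      rw [← _root_.zpow_natCast y n, ← _root_.zpow_mul, ← _root_.zpow_add, ← bezout, zpow_one]
    _ = y ^ (m * m.gcdA n) * x ^ (m * m.gcdB n) := by
      rw [← hxy, ← _root_.zpow_natCast x m, ← _root_.zpow_mul]
    _ = (y ^ m.gcdA n * x ^ m.gcdB n) ^ m := by
      rw [mul_pow, _root_.zpow_mul', _root_.zpow_mul', _root_.zpow_natCast, _root_.zpow_natCast]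

variable {Γ : Type*} [Group Γ]

theorem exists_orderOf_eq_and_zpowers_eq {G : Subgroup Γ} {q : ℕ}
    (e : G ≃* Multiplicative (ZMod q)) : ∃ x : Γ, orderOf x = q ∧ Subgroup.zpowers x = G := by
  have : IsCyclic G := isCyclic_of_surjective e.symm e.symm.surjective
  obtain ⟨x, rfl⟩ := G.isCyclic_iff_exists_zpowers_eq_top.mp this
  refine ⟨x, ?_, rfl⟩
  rw [← Nat.card_zpowers, Nat.card_congr e.toEquiv, Nat.card_congr Multiplicative.toAdd,
    Nat.card_zmod]

theorem zpowers_pow_of_coprime {x : Γ} {k : ℕ} (h : k.Coprime (orderOf x)) :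
    Subgroup.zpowers (x ^ k) = Subgroup.zpowers x :=
  le_antisymm (Subgroup.zpowers_le.mpr (Subgroup.npow_mem_zpowers x k))
    (Subgroup.zpowers_le.mpr (mem_zpowers_pow_iff.mpr h))

theorem orderOf_eq_of_isConj {x y : Γ} (h : IsConj x y) : orderOf x = orderOf y :=
  let ⟨_, hc⟩ := h
  hc.orderOf_eq _

theorem exists_map_conj_zpowers_eq_closure {x y : Γ} (h : IsConj x y) :
    ∃ φ : Γ, (Subgroup.zpowers x).map (MulAut.conj φ⁻¹).toMonoidHom = Subgroup.closure {y} := by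
  obtain ⟨c, rfl⟩ := isConj_iff.mp h
  refine ⟨c⁻¹, ?_⟩
  rw [MonoidHom.map_zpowers, Subgroup.zpowers_eq_closure]
  simp

end Group

section Weights

variable {ι R : Type*} [CommRing R]

/-- Weight vectors `a`, `b : ι → R` are equivalent if `b` arises from `a` by permuting the
coordinates and applying an invertible affine map `x ↦ u x + t`. For `R = ZMod q` this relates the
exponents of diagonal matrices whose classes generate conjugate subgroups of the projective linear
group. -/
def WeightEquiv (a b : ι → R) : Prop :=
  ∃ (σ : Equiv.Perm ι) (u : Rˣ) (t : R), ∀ i, b i = u * a (σ i) + t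

theorem WeightEquiv.refl (a : ι → R) : WeightEquiv a a :=
  ⟨1, 1, 0, fun i => by simp⟩

theorem WeightEquiv.trans {a b c : ι → R} (hab : WeightEquiv a b) (hbc : WeightEquiv b c) :
    WeightEquiv a c := by
  obtain ⟨σ, u, t, hb⟩ := hab
  obtain ⟨τ, v, s, hc⟩ := hbc
  refine ⟨σ * τ, v * u, v * t + s, fun i => ?_⟩
  rw [hc, hb, Equiv.Perm.mul_apply, Units.val_mul]
  ring

theorem exists_weightEquiv_zero_one [Nontrivial R] {a : Fin 3 → R} {i j : Fin 3}
    (h : IsUnit (a j - a i)) : ∃ l, WeightEquiv a ![0, 1, l] := by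
  have hij : i ≠ j := by
    rintro rfl
    simp at h
  have extend : ∀ i j : Fin 3, i ≠ j → ∃ σ : Equiv.Perm (Fin 3), σ 0 = i ∧ σ 1 = j := by decide
  obtain ⟨σ, rfl, rfl⟩ := extend i j hij
  obtain ⟨u, hu⟩ := h
  refine ⟨↑u⁻¹ * (a (σ 2) - a (σ 0)), σ, u⁻¹, -(↑u⁻¹ * a (σ 0)), fun k => ?_⟩
  fin_cases k
  · simp
  · simp [← sub_eq_add_neg, ← mul_sub, ← hu]
  · simp [← sub_eq_add_neg, ← mul_sub]

theorem weightEquiv_one_sub (l : R) : WeightEquiv ![0, 1, l] ![0, 1, 1 - l] := by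
  refine ⟨Equiv.swap 0 1, -1, 1, fun i => ?_⟩
  fin_cases i
  · simp
  · simp
  · simp [Equiv.swap_apply_of_ne_of_ne, neg_add_eq_sub]

theorem weightEquiv_of_mul_eq_one {l m : R} (h : l * m = 1) :
    WeightEquiv ![0, 1, l] ![0, 1, m] := by
  refine ⟨Equiv.swap 1 2, Units.mkOfMulEqOne m l (by rw [mul_comm, h]), 0, fun i => ?_⟩
  fin_cases i
  · simp [Equiv.swap_apply_of_ne_of_ne]
  · simp [mul_comm m l, h]
  · simp

theorem weightEquiv_zero_or_two_of_four (l : ZMod 4) :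
    WeightEquiv ![0, 1, l] ![0, 1, 0] ∨ WeightEquiv ![0, 1, l] ![0, 1, 2] := by
  fin_cases l
  · exact .inl (.refl _)
  · exact .inl (weightEquiv_one_sub 1)
  · exact .inr (.refl _)
  · exact .inr (weightEquiv_one_sub 3)

theorem weightEquiv_zero_or_three_of_five (l : ZMod 5) :
    WeightEquiv ![0, 1, l] ![0, 1, 0] ∨ WeightEquiv ![0, 1, l] ![0, 1, 3] := by
  have two_three : WeightEquiv ![0, 1, (2 : ZMod 5)] ![0, 1, 3] := weightEquiv_of_mul_eq_one rfl
  fin_cases l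
  · exact .inl (.refl _)
  · exact .inl (weightEquiv_one_sub 1)
  · exact .inr two_three
  · exact .inr (.refl _)
  · exact .inr ((weightEquiv_one_sub 4).trans two_three)

theorem weightEquiv_zero_or_two_or_three_of_seven (l : ZMod 7) :
    WeightEquiv ![0, 1, l] ![0, 1, 0] ∨ WeightEquiv ![0, 1, l] ![0, 1, 2] ∨
      WeightEquiv ![0, 1, l] ![0, 1, 3] := by
  fin_cases l
  · exact .inl (.refl _)
  · exact .inl (weightEquiv_one_sub 1)
  · exact .inr (.inl (.refl _))
  · exact .inr (.inr (.refl _))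
  · exact .inr (.inl (weightEquiv_of_mul_eq_one rfl))
  · exact .inr (.inr (weightEquiv_one_sub 5))
  · exact .inr (.inl (weightEquiv_one_sub 6))

theorem prime_pow_mul_eq_zero_of_not_isUnit {p m : ℕ} (hp : p.Prime) {x : ZMod (p ^ (m + 1))}
    (hx : ¬IsUnit x) : (p ^ m : ℕ) * x = 0 := by
  have : NeZero (p ^ (m + 1)) := ⟨pow_ne_zero _ hp.ne_zero⟩
  have hpx : p ∣ x.val := by
    by_contra hpx
    rw [← ZMod.natCast_zmod_val x, ZMod.isUnit_iff_coprime] at hx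
    exact hx ((hp.coprime_iff_not_dvd.mpr hpx).symm.pow_right _)
  rw [← ZMod.natCast_zmod_val x, ← Nat.cast_mul, ZMod.natCast_eq_zero_iff]
  exact (pow_succ p m).dvd.trans (mul_dvd_mul_left _ hpx)

end Weights

section Diagonalization

variable {K V : Type*} [Field K] [AddCommGroup V] [Module K V]

theorem iSup_eigenspace_eq_top_of_aeval_nodal_eq_zero {f : Module.End K V} {s : Finset K}
    (hs : s.Nonempty) (hf : Polynomial.aeval f (Lagrange.nodal s id) = 0) :
    ⨆ μ ∈ s, f.eigenspace μ = ⊤ := by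
  have mem_eigenspace : ∀ μ ∈ s, ∀ v,
      Polynomial.aeval f (Lagrange.basis s id μ) v ∈ f.eigenspace μ := by
    intro μ hμ v
    have hdvd : Lagrange.nodal s id ∣ (Polynomial.X - Polynomial.C μ) * Lagrange.basis s id μ := by
      rw [Lagrange.basis_eq_prod_sub_inv_mul_nodal_div hμ, ← Lagrange.nodal_erase_eq_nodal_div hμ,
        mul_left_comm]
      exact Dvd.intro_left _ (by rw [Lagrange.nodal_eq_mul_nodal_erase hμ, id])
    obtain ⟨p, hp⟩ := hdvd
    have hkill := congrArg (Polynomial.aeval f · v) hp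
    simpa [hf, sub_eq_zero, Module.End.mem_eigenspace_iff] using hkill
  refine eq_top_iff.mpr fun v _ => ?_
  have hv : v = ∑ μ ∈ s, Polynomial.aeval f (Lagrange.basis s id μ) v := by
    rw [← LinearMap.sum_apply, ← map_sum, Lagrange.sum_basis Function.injective_id.injOn hs,
      map_one, Module.End.one_apply]
  rw [hv]
  exact Submodule.sum_mem _ fun μ hμ =>
    Submodule.mem_iSup_of_mem μ (Submodule.mem_iSup_of_mem hμ (mem_eigenspace μ hμ v))

theorem exists_basis_apply_eq_smul {ι : Type*} (b₀ : Module.Basis ι K V) {f : Module.End K V}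
    {s : Set K} (hf : ⨆ μ ∈ s, f.eigenspace μ = ⊤) :
    ∃ (b : Module.Basis ι K V) (d : ι → K), ∀ i, d i ∈ s ∧ f (b i) = d i • b i := by
  have hspan : ⊤ ≤ Submodule.span K {v | ∃ μ ∈ s, f v = μ • v} := by
    rw [← hf]
    exact iSup₂_le fun μ hμ v hv =>
      Submodule.subset_span ⟨μ, hμ, Module.End.mem_eigenspace_iff.mp hv⟩
  let c := Module.Basis.ofSpan hspan
  let b := c.reindex (c.indexEquiv b₀)
  have hb : ∀ i, ∃ μ ∈ s, f (b i) = μ • b i := fun i =>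
    Module.Basis.ofSpan_subset hspan (by simp [b, c])
  choose d hd using hb
  exact ⟨b, d, hd⟩

end Diagonalization

section DiagonalAddChar

variable {n R A : Type*} [Fintype n] [DecidableEq n] [CommRing R] [AddGroup A]

/-- The invertible diagonal matrix with entries `ψ (a i)`, as an additive character in the weight
vector `a : n → A`. -/
def diagonalAddChar (ψ : AddChar A R) : AddChar (n → A) (GL n R) where
  toFun a :=
    { val := diagonal fun i => ψ (a i)
      inv := diagonal fun i => ψ (-a i)
      val_inv := by simp [diagonal_mul_diagonal, ← AddChar.map_add_eq_mul]
      inv_val := by simp [diagonal_mul_diagonal, ← AddChar.map_add_eq_mul] }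
  map_zero_eq_one' := by ext; simp
  map_add_eq_mul' a b := by
    ext : 1
    simp [diagonal_mul_diagonal, AddChar.map_add_eq_mul]

theorem val_diagonalAddChar (ψ : AddChar A R) (a : n → A) :
    (diagonalAddChar ψ a).val = diagonal fun i => ψ (a i) :=
  rfl

theorem mk_diagonalAddChar_const (ψ : AddChar A R) (t : A) :
    mk (diagonalAddChar ψ fun _ : n => t) = 1 :=
  mk_eq_one.mpr (GeneralLinearGroup.mem_center_iff_val_mem_range_scalar.mpr ⟨ψ t, rfl⟩)

theorem isConj_diagonalAddChar_comp (ψ : AddChar A R) (a : n → A) (σ : Equiv.Perm n) :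
    IsConj (diagonalAddChar ψ a) (diagonalAddChar ψ (a ∘ σ)) := by
  let P : GL n R := permMatrixHom.toHomUnits σ⁻¹
  have hP : P.val = σ.permMatrix R := by
    rw [MonoidHom.coe_toHomUnits, permMatrixHom_apply, inv_inv]
  refine isConj_iff.mpr ⟨P, mul_inv_eq_iff_eq_mul.mpr (Units.ext ?_)⟩
  rw [Units.val_mul, Units.val_mul, hP, val_diagonalAddChar, val_diagonalAddChar]
  ext i j
  by_cases hij : σ i = j <;> simp [Equiv.Perm.permMatrix, PEquiv.toMatrix_apply, hij]

theorem exists_isConj_mk_pow_of_weightEquiv {q : ℕ} [NeZero q] (ψ : AddChar (ZMod q) R)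
    {a b : n → ZMod q} (h : WeightEquiv a b) :
    ∃ k : ℕ, k.Coprime q ∧ IsConj (mk (diagonalAddChar ψ a) ^ k) (mk (diagonalAddChar ψ b)) := by
  obtain ⟨σ, u, t, hb⟩ := h
  refine ⟨u.val.val, ZMod.val_coe_unit_coprime u, ?_⟩
  have hb' : b = (u.val.val • a) ∘ σ + fun _ => t := by
    ext i
    rw [hb, Pi.add_apply, Function.comp_apply, Pi.smul_apply, nsmul_eq_mul, ZMod.natCast_zmod_val]
  rw [hb', AddChar.map_add_eq_mul, map_mul, mk_diagonalAddChar_const, mul_one, ← map_pow,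
    ← AddChar.map_nsmul_eq_pow]
  exact mk.map_isConj (isConj_diagonalAddChar_comp ψ _ σ)

theorem exists_isUnit_sub_of_orderOf_mk [Nonempty n] {p m : ℕ} (hp : p.Prime)
    {ψ : AddChar (ZMod (p ^ (m + 1))) R} {a : n → ZMod (p ^ (m + 1))}
    (h : orderOf (mk (diagonalAddChar ψ a)) = p ^ (m + 1)) : ∃ i j, IsUnit (a j - a i) := by
  by_contra! hunit
  obtain ⟨i₀⟩ := ‹Nonempty n›
  have hconst : p ^ m • a = fun _ => p ^ m • a i₀ := by
    ext i
    have := prime_pow_mul_eq_zero_of_not_isUnit hp (hunit i₀ i)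
    rwa [mul_sub, sub_eq_zero, ← nsmul_eq_mul, ← nsmul_eq_mul] at this
  refine pow_ne_one_of_lt_orderOf (pow_ne_zero m hp.ne_zero) ?_ (x := mk (diagonalAddChar ψ a)) ?_
  · rw [h]
    exact Nat.pow_lt_pow_right hp.one_lt m.lt_succ_self
  · rw [← map_pow, ← AddChar.map_nsmul_eq_pow, hconst, mk_diagonalAddChar_const]

end DiagonalAddChar

section PGL

variable {n : Type*} [Fintype n] [DecidableEq n]

theorem exists_mk_eq_and_pow_eq_one {R : Type*} [CommRing R] {q : ℕ}
    (hq : q.Coprime (Fintype.card n)) {x : PGL(n, R)} (hx : x ^ q = 1) :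
    ∃ g : GL n R, mk g = x ∧ g ^ q = 1 := by
  obtain ⟨g, rfl⟩ := mk_surjective x
  rw [← map_pow, mk_eq_one, GeneralLinearGroup.center_eq_range_scalar] at hx
  obtain ⟨u, hu⟩ := hx
  have hdet : GeneralLinearGroup.det g ^ q = u ^ Fintype.card n := by
    rw [← map_pow, ← hu, GeneralLinearGroup.det_scalar]
  obtain ⟨v, rfl⟩ := exists_eq_pow_of_pow_eq_pow_of_coprime hq hdet
  refine ⟨GeneralLinearGroup.scalar n v⁻¹ * g, by simp, ?_⟩
  have hcomm : Commute (GeneralLinearGroup.scalar n v⁻¹) g :=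
    GeneralLinearGroup.scalar_commute v⁻¹ g
  rw [hcomm.mul_pow, ← hu, ← map_pow, ← map_mul, inv_pow, inv_mul_cancel, map_one]

variable {K : Type*} [Field K] {q : ℕ} [NeZero q] {ζ : K}

theorem exists_isConj_diagonalAddChar (hζ : IsPrimitiveRoot ζ q) {g : GL n K} (hg : g ^ q = 1) :
    ∃ a : n → ZMod q, IsConj g (diagonalAddChar (AddChar.zmodChar q hζ.pow_eq_one) a) := by
  have hroot : Polynomial.aeval (toLin' g.val)
      (Lagrange.nodal (Polynomial.nthRootsFinset q (1 : K)) id) = 0 := by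
    rw [Lagrange.nodal_eq]
    simp only [id]
    rw [← Polynomial.X_pow_sub_one_eq_prod (NeZero.pos q) hζ]
    simp [← toLin'_pow, ← Units.val_pow_eq_pow_val, hg, Module.End.one_eq_id]
  obtain ⟨b, d, hd⟩ := exists_basis_apply_eq_smul (Pi.basisFun K n)
    (iSup_eigenspace_eq_top_of_aeval_nodal_eq_zero ⟨1, by simp [NeZero.pos]⟩ hroot)
  have hweight : ∀ i, ∃ k : ℕ, ζ ^ k = d i := fun i =>
    (hζ.eq_pow_of_pow_eq_one
      ((Polynomial.mem_nthRootsFinset (NeZero.pos q) (1 : K)).mp (hd i).1)).imp fun _ h => h.2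
  choose k hk using hweight
  let P : GL n K :=
    { val := (Pi.basisFun K n).toMatrix b
      inv := b.toMatrix (Pi.basisFun K n)
      val_inv := Module.Basis.toMatrix_mul_toMatrix_flip _ _
      inv_val := Module.Basis.toMatrix_mul_toMatrix_flip _ _ }
  refine ⟨fun i => k i, .symm <| isConj_iff.mpr ⟨P, mul_inv_eq_iff_eq_mul.mpr ?_⟩⟩
  ext i j
  have hij : (g.val *ᵥ b j) i = d j * b j i := congrFun (hd j).2 i
  have hgP : (g.val * P.val) i j = (g.val *ᵥ b j) i := rfl
  rw [Units.val_mul, Units.val_mul, hgP, hij, val_diagonalAddChar, mul_diagonal, mul_comm,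
    AddChar.zmodChar_apply', hk]
  rfl

theorem exists_isConj_mk_diagonalAddChar (hζ : IsPrimitiveRoot ζ q)
    (hq : q.Coprime (Fintype.card n)) {x : PGL(n, K)} (hx : x ^ q = 1) :
    ∃ a : n → ZMod q, IsConj x (mk (diagonalAddChar (AddChar.zmodChar q hζ.pow_eq_one) a)) := by
  obtain ⟨g, rfl, hg⟩ := exists_mk_eq_and_pow_eq_one hq hx
  obtain ⟨a, ha⟩ := exists_isConj_diagonalAddChar hζ hg
  exact ⟨a, mk.map_isConj ha⟩

end PGL

section PGL3

variable {K : Type*} [Field K]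

theorem toPGL3_val (g : GL (Fin 3) K) : toPGL3 g.val = mk g := by
  have hg : GeneralLinearGroup.mkOfDetNeZero g.val g.det_ne_zero = g := Units.ext rfl
  rw [toPGL3, dif_pos g.det_ne_zero, hg]
  rfl

theorem toPGL3_diagonal_zero_one {q : ℕ} [NeZero q] {ζ : K} (hζ : ζ ^ q = 1) (k : ℕ) :
    toPGL3 (diagonal ![1, ζ, ζ ^ k]) =
      mk (diagonalAddChar (AddChar.zmodChar q hζ) ![0, 1, (k : ZMod q)]) := by
  rw [← toPGL3_val, val_diagonalAddChar]
  congr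
  ext i
  fin_cases i
  · simp
  · simpa using (AddChar.zmodChar_apply' hζ 1).symm
  · exact (AddChar.zmodChar_apply' hζ k).symm

theorem exists_map_conj_eq_closure_of_weightEquiv {q : ℕ} (hq : IsPrimePow q) (hq3 : q.Coprime 3)
    {ζ : K} (hζ : IsPrimitiveRoot ζ q) {G : Subgroup (PGL3 K)}
    (hG : Nonempty (G ≃* Multiplicative (ZMod q))) :
    ∃ l : ZMod q, ∀ k : ℕ, WeightEquiv ![0, 1, l] ![0, 1, (k : ZMod q)] →
      ∃ φ : PGL3 K, G.map (MulAut.conj φ⁻¹).toMonoidHom =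
        Subgroup.closure {toPGL3 (diagonal ![1, ζ, ζ ^ k])} := by
  have : NeZero q := ⟨hq.ne_zero⟩
  have : Fact (1 < q) := ⟨hq.one_lt⟩
  obtain ⟨p, _, hp, hpos, rfl⟩ := hq
  obtain ⟨m, rfl⟩ := Nat.exists_eq_add_one.mpr hpos
  obtain ⟨x, hx, rfl⟩ := exists_orderOf_eq_and_zpowers_eq hG.some
  obtain ⟨a, ha⟩ := exists_isConj_mk_diagonalAddChar (n := Fin 3) hζ hq3 (hx ▸ pow_orderOf_eq_one x)
  obtain ⟨i, j, hij⟩ := exists_isUnit_sub_of_orderOf_mk hp.nat_prime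
    ((orderOf_eq_of_isConj ha).symm.trans hx)
  obtain ⟨l, hl⟩ := exists_weightEquiv_zero_one hij
  refine ⟨l, fun k hk => ?_⟩
  obtain ⟨r, hr, hconj⟩ := exists_isConj_mk_pow_of_weightEquiv
    (AddChar.zmodChar _ hζ.pow_eq_one) (hl.trans hk)
  rw [← zpowers_pow_of_coprime (hx ▸ hr), toPGL3_diagonal_zero_one hζ.pow_eq_one]
  exact exists_map_conj_zpowers_eq_closure ((ha.pow r).trans hconj)

theorem stmt1_general {q : ℕ} (hq : q = 4 ∨ q = 5 ∨ q = 7) {ζ : K} (hζ : IsPrimitiveRoot ζ q)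
    (G : Subgroup (PGL3 K)) (hG : Nonempty (G ≃* Multiplicative (ZMod q))) :
    ∃ φ : PGL3 K,
      (q = 4 →
        Subgroup.map (MulAut.conj φ⁻¹).toMonoidHom G =
            Subgroup.closure {toPGL3 (Matrix.diagonal ![1, ζ, 1])} ∨
          Subgroup.map (MulAut.conj φ⁻¹).toMonoidHom G =
            Subgroup.closure {toPGL3 (Matrix.diagonal ![1, ζ, -1])}) ∧
      (q = 5 →
        Subgroup.map (MulAut.conj φ⁻¹).toMonoidHom G =
            Subgroup.closure {toPGL3 (Matrix.diagonal ![1, ζ, 1])} ∨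
          Subgroup.map (MulAut.conj φ⁻¹).toMonoidHom G =
            Subgroup.closure {toPGL3 (Matrix.diagonal ![1, ζ, ζ ^ 3])}) ∧
      (q = 7 →
        Subgroup.map (MulAut.conj φ⁻¹).toMonoidHom G =
            Subgroup.closure {toPGL3 (Matrix.diagonal ![1, ζ, 1])} ∨
          Subgroup.map (MulAut.conj φ⁻¹).toMonoidHom G =
            Subgroup.closure {toPGL3 (Matrix.diagonal ![1, ζ, ζ ^ 2])} ∨
          Subgroup.map (MulAut.conj φ⁻¹).toMonoidHom G =
            Subgroup.closure {toPGL3 (Matrix.diagonal ![1, ζ, ζ ^ 3])}) := by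
  rcases hq with rfl | rfl | rfl
  · have hneg : ζ ^ 2 = -1 := (hζ.pow four_pos rfl).eq_neg_one_of_two_right
    obtain ⟨l, hl⟩ := exists_map_conj_eq_closure_of_weightEquiv
      (Nat.prime_two.isPrimePow.pow two_ne_zero) (by decide) hζ hG
    rcases weightEquiv_zero_or_two_of_four l with h | h
    · exact (hl 0 h).imp fun φ hφ => ⟨fun _ => .inl (by simpa using hφ), by simp, by simp⟩
    · exact (hl 2 h).imp fun φ hφ => ⟨fun _ => .inr (hneg ▸ hφ), by simp, by simp⟩
  · obtain ⟨l, hl⟩ := exists_map_conj_eq_closure_of_weightEquiv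
      Nat.prime_five.isPrimePow (by decide) hζ hG
    rcases weightEquiv_zero_or_three_of_five l with h | h
    · exact (hl 0 h).imp fun φ hφ => ⟨by simp, fun _ => .inl (by simpa using hφ), by simp⟩
    · exact (hl 3 h).imp fun φ hφ => ⟨by simp, fun _ => .inr hφ, by simp⟩
  · obtain ⟨l, hl⟩ := exists_map_conj_eq_closure_of_weightEquiv
      Nat.prime_seven.isPrimePow (by decide) hζ hG
    rcases weightEquiv_zero_or_two_or_three_of_seven l with h | h | h
    · exact (hl 0 h).imp fun φ hφ => ⟨by simp, by simp, fun _ => .inl (by simpa using hφ)⟩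
    · exact (hl 2 h).imp fun φ hφ => ⟨by simp, by simp, fun _ => .inr (.inl hφ)⟩
    · exact (hl 3 h).imp fun φ hφ => ⟨by simp, by simp, fun _ => .inr (.inr hφ)⟩

end PGL3

theorem stmt1 {K : Type*} [Field K] [IsAlgClosed K] [CharZero K]
    (q : ℕ) (hq : q = 4 ∨ q = 5 ∨ q = 7)
    (G : Subgroup (PGL3 K)) (hG : Nonempty (G ≃* Multiplicative (ZMod q))) :
    ∃ (φ : PGL3 K) (ζ : K),
      IsPrimitiveRoot ζ q ∧
      (q = 4 →
        Subgroup.map (MulAut.conj φ⁻¹).toMonoidHom G =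
            Subgroup.closure {toPGL3 (Matrix.diagonal ![1, ζ, 1])} ∨
          Subgroup.map (MulAut.conj φ⁻¹).toMonoidHom G =
            Subgroup.closure {toPGL3 (Matrix.diagonal ![1, ζ, -1])}) ∧
      (q = 5 →
        Subgroup.map (MulAut.conj φ⁻¹).toMonoidHom G =
            Subgroup.closure {toPGL3 (Matrix.diagonal ![1, ζ, 1])} ∨
          Subgroup.map (MulAut.conj φ⁻¹).toMonoidHom G =
            Subgroup.closure {toPGL3 (Matrix.diagonal ![1, ζ, ζ ^ 3])}) ∧
      (q = 7 →
        Subgroup.map (MulAut.conj φ⁻¹).toMonoidHom G =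
            Subgroup.closure {toPGL3 (Matrix.diagonal ![1, ζ, 1])} ∨
          Subgroup.map (MulAut.conj φ⁻¹).toMonoidHom G =
            Subgroup.closure {toPGL3 (Matrix.diagonal ![1, ζ, ζ ^ 2])} ∨
          Subgroup.map (MulAut.conj φ⁻¹).toMonoidHom G =
            Subgroup.closure {toPGL3 (Matrix.diagonal ![1, ζ, ζ ^ 3])}) := by
  have : NeZero q := ⟨by rintro rfl; simp at hq⟩
  obtain ⟨ζ, hζ⟩ := HasEnoughRootsOfUnity.exists_primitiveRoot K q
  obtain ⟨φ, hφ⟩ := stmt1_general hq hζ G hG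
  exact ⟨φ, ζ, hζ, hφ⟩
end
end

section
/- Let K be an algebraically closed field of characteristic 0, let ζ ∈ K be a primitive 7th root of unity, and let F : K³ → K³ be the polynomial map F(X,Y,Z) = (Z², X², Y²). Then Aut(F) is exactly the subgroup of PGL₃(K) generated by the class [diag(1, ζ, ζ³)] and the class of the permutation matrix with rows (0,1,0), (0,0,1), (1,0,0); this subgroup has order 21 and is isomorphic to the semidirect product C₇ ⋊ C₃ of a cyclic group of order 7 by a cyclic group of order 3 acting nontrivially. -/
open Matrix MvPolynomial
open scoped Classical

noncomputable section

/-!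
Rescaling the matrix of an automorphism by `c⁻¹` gives a matrix `A` with `F (A v) = A (F v)`. Since
`F (eⱼ + eₖ) = F eⱼ + F eₖ` for `j ≠ k`, evaluating at `eⱼ + eₖ` shows that the product of two
entries in the same row vanishes, so each row has exactly one nonzero entry; evaluating at `eⱼ`
shows that squaring the entry `(i, j)` gives the entry `(i + 1, j + 1)`. Hence the nonzero entries
lie on one cyclic diagonal `j = i + k` and equal `x`, `x ^ 2`, `x ^ 4` with `x ^ 8 = x`, that is,
`A = x • (diag(1, x, x ^ 3) * P ^ k)` with `x` a power of `ζ`. The relation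
`P * D = ζ • (D ^ 2 * P)`, where `D = diag(1, ζ, ζ ^ 3)` and `P` is the permutation matrix, shows
that `[P]` of order 3 acts by squaring on the cyclic group of order 7 generated by `[D]`.
-/

section SemidirectProduct

variable {G : Type*} [Group G]

open Subgroup

theorem range_monoidHomSubgroup {H K : Subgroup G} (h : K ≤ normalizer H) :
    (SemidirectProduct.monoidHomSubgroup h).range = H ⊔ K := by
  apply le_antisymm
  · rintro _ ⟨x, rfl⟩
    exact mul_mem_sup x.left.2 x.right.2
  · refine sup_le (fun x hx => ?_) (fun x hx => ?_)
    · exact ⟨SemidirectProduct.inl ⟨x, hx⟩, SemidirectProduct.lift_inl ..⟩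
    · exact ⟨SemidirectProduct.inr ⟨x, hx⟩, SemidirectProduct.lift_inr ..⟩

theorem monoidHomSubgroup_injective {H K : Subgroup G} (h : K ≤ normalizer H)
    (hd : Disjoint H K) : Function.Injective (SemidirectProduct.monoidHomSubgroup h) :=
  (mul_injective_of_disjoint hd).comp SemidirectProduct.equivProd.injective

/-- The internal semidirect product: a subgroup `K` that normalizes `H` and meets it trivially
generates with it a copy of `H ⋊ K`, for the action of `K` on `H` by conjugation. -/
def semidirectProductMulEquivSup {H K : Subgroup G} (h : K ≤ normalizer H) (hd : Disjoint H K) :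
    H ⋊[H.normalizerMonoidHom.comp (inclusion h)] K ≃* ↥(H ⊔ K) :=
  (MonoidHom.ofInjective (monoidHomSubgroup_injective h hd)).trans
    (MulEquiv.subgroupCongr (range_monoidHomSubgroup h))

theorem mem_normalizer_zpowers {a b : G} (ha : IsOfFinOrder a) (hab : b * a * b⁻¹ ∈ zpowers a) :
    b ∈ normalizer (zpowers a : Set G) := by
  have : Finite (zpowers a : Set G) := finite_zpowers.2 ha
  refine mem_normalizer_fintype ?_
  rintro _ ⟨k, rfl⟩
  simpa only [conj_zpow, SetLike.mem_coe] using zpow_mem hab k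

theorem exists_closure_pair_mulEquiv_semidirectProduct {a b : G} {n m : ℕ} (ha : orderOf a = n)
    (hb : orderOf b = m) (hnorm : b ∈ normalizer (zpowers a : Set G))
    (hd : Disjoint (zpowers a) (zpowers b)) (hab : ¬Commute a b) :
    ∃ ψ : Multiplicative (ZMod m) →* MulAut (Multiplicative (ZMod n)), ψ ≠ 1 ∧
      Nonempty (closure {a, b} ≃* Multiplicative (ZMod n) ⋊[ψ] Multiplicative (ZMod m)) := by
  have hle : zpowers b ≤ normalizer (zpowers a : Set G) := zpowers_le.2 hnorm
  have hsup : closure {a, b} = zpowers a ⊔ zpowers b := by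
    rw [Set.insert_eq, Subgroup.closure_union, ← zpowers_eq_closure, ← zpowers_eq_closure]
  rw [← Nat.card_zpowers] at ha hb
  subst ha hb
  let f := (zmodCyclicMulEquiv (G := zpowers a) inferInstance).symm
  let g := (zmodCyclicMulEquiv (G := zpowers b) inferInstance).symm
  refine ⟨_, fun hψ => hab ?_, ⟨(MulEquiv.subgroupCongr hsup).trans <|
    (semidirectProductMulEquivSup hle hd).symm.trans <| SemidirectProduct.congr' f g⟩⟩
  have hfix := DFunLike.congr_fun (DFunLike.congr_fun hψ (g ⟨b, mem_zpowers b⟩))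
    (f ⟨a, mem_zpowers a⟩)
  have hconj : b * a * b⁻¹ = a := by simpa [Subtype.ext_iff] using hfix
  exact (mul_inv_eq_iff_eq_mul.1 hconj).symm

end SemidirectProduct

section PGL

variable {K : Type*} [Field K] {A B : Matrix (Fin 3) (Fin 3) K}

theorem toPGL3_coe (g : GL (Fin 3) K) : toPGL3 (g : Matrix (Fin 3) (Fin 3) K) = (g : PGL3 K) := by
  rw [toPGL3, dif_pos (GeneralLinearGroup.det_ne_zero g)]
  exact congrArg _ (Units.ext rfl)

theorem toPGL3_mul (hA : IsUnit A) (hB : IsUnit B) :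
    toPGL3 (A * B) = toPGL3 A * toPGL3 B := by
  lift A to GL (Fin 3) K using hA
  lift B to GL (Fin 3) K using hB
  rw [← Units.val_mul, toPGL3_coe, toPGL3_coe, toPGL3_coe, QuotientGroup.mk_mul]

theorem toPGL3_pow (hA : IsUnit A) (n : ℕ) : toPGL3 (A ^ n) = toPGL3 A ^ n := by
  lift A to GL (Fin 3) K using hA
  rw [← Units.val_pow_eq_pow_val, toPGL3_coe, toPGL3_coe, QuotientGroup.mk_pow]

theorem toPGL3_eq_one_iff (hA : IsUnit A) :
    toPGL3 A = 1 ↔ A ∈ Set.range (scalar (Fin 3)) := by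
  lift A to GL (Fin 3) K using hA
  rw [toPGL3_coe, QuotientGroup.eq_one_iff,
    GeneralLinearGroup.mem_center_iff_val_mem_range_scalar]

theorem toPGL3_smul {t : K} (ht : t ≠ 0) (hA : IsUnit A) : toPGL3 (t • A) = toPGL3 A := by
  have hunit : IsUnit (scalar (Fin 3) t) := ht.isUnit.map _
  rw [smul_eq_diagonal_mul, ← scalar_apply, toPGL3_mul hunit hA,
    (toPGL3_eq_one_iff hunit).2 ⟨t, rfl⟩, one_mul]

end PGL

section Aut

variable {K : Type*} [Field K] {F : (Fin 3 → K) → (Fin 3 → K)}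

/-- The automorphism group of `F`: the set `AutQ F` bundled as a subgroup of `PGL₃(K)`. -/
def autSubgroup (F : (Fin 3 → K) → (Fin 3 → K)) : Subgroup (PGL3 K) where
  carrier := AutQ F
  one_mem' := ⟨1, rfl, 1, one_ne_zero, by simp⟩
  mul_mem' := by
    rintro _ _ ⟨M, rfl, c, hc, hM⟩ ⟨N, rfl, d, hd, hN⟩
    refine ⟨M * N, rfl, c * d, mul_ne_zero hc hd, fun v => ?_⟩
    rw [Units.val_mul, ← mulVec_mulVec, hM, hN, mulVec_smul, mulVec_mulVec, smul_smul]
  inv_mem' := by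
    rintro _ ⟨M, rfl, c, hc, hM⟩
    refine ⟨M⁻¹, rfl, c⁻¹, inv_ne_zero hc, fun v => ?_⟩
    have hv := hM (M⁻¹.val *ᵥ v)
    rw [mulVec_mulVec, Units.mul_inv, one_mulVec] at hv
    rw [hv, mulVec_smul, mulVec_mulVec, Units.inv_mul, one_mulVec, inv_smul_smul₀ hc]

theorem toPGL3_mem_autSubgroup {A : Matrix (Fin 3) (Fin 3) K} (hA : IsUnit A) {c : K} (hc : c ≠ 0)
    (h : ∀ v, F (A *ᵥ v) = c • (A *ᵥ F v)) : toPGL3 A ∈ autSubgroup F := by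
  lift A to GL (Fin 3) K using hA
  exact ⟨A, (toPGL3_coe A).symm, c, hc, h⟩

theorem exists_semiconj_of_mem_autSubgroup (hF : ∀ (t : K) v, F (t • v) = t ^ 2 • F v)
    {φ : PGL3 K} (hφ : φ ∈ autSubgroup F) :
    ∃ A : Matrix (Fin 3) (Fin 3) K, IsUnit A ∧ toPGL3 A = φ ∧ ∀ v, F (A *ᵥ v) = A *ᵥ F v := by
  obtain ⟨M, rfl, c, hc, hM⟩ := hφ
  refine ⟨c⁻¹ • M.val, M.isUnit.smul (Units.mk0 c⁻¹ (inv_ne_zero hc)), ?_, fun v => ?_⟩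
  · rw [toPGL3_smul (inv_ne_zero hc) M.isUnit, toPGL3_coe]
  · rw [smul_mulVec, hF, hM, smul_mulVec, smul_smul]
    congr 1
    field_simp

end Aut

section PermSquareMap

/-- The quadratic map `v ↦ (v (σ i) ^ 2)ᵢ` on `ι`-tuples. The map `(Z², X², Y²)` of the theorem is
the case where `σ` is the shift `i ↦ i - 1` of `Fin 3`. -/
def permSquareMap {ι R : Type*} [Monoid R] (σ : Equiv.Perm ι) (v : ι → R) : ι → R :=
  fun i => v (σ i) ^ 2

variable {ι R : Type*} {σ : Equiv.Perm ι}

theorem permSquareMap_smul [CommMonoid R] (t : R) (v : ι → R) :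
    permSquareMap σ (t • v) = t ^ 2 • permSquareMap σ v :=
  funext fun _ => mul_pow ..

theorem permSquareMap_single [CommSemiring R] [DecidableEq ι] (j : ι) :
    permSquareMap σ (Pi.single (σ j) (1 : R)) = Pi.single j 1 := by
  ext i
  simp [permSquareMap, Pi.single_apply]

theorem permSquareMap_add_of_mul_eq_zero [CommSemiring R] {v w : ι → R} (h : v * w = 0) :
    permSquareMap σ (v + w) = permSquareMap σ v + permSquareMap σ w := by
  ext i
  have hi : v (σ i) * w (σ i) = 0 := congrFun h (σ i)
  simp only [permSquareMap, Pi.add_apply, add_sq, mul_assoc, hi, mul_zero, add_zero]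

variable [Fintype ι]

theorem sq_apply_perm_eq [CommSemiring R] {A : Matrix ι ι R}
    (hA : ∀ v, permSquareMap σ (A *ᵥ v) = A *ᵥ permSquareMap σ v) (i j : ι) :
    A (σ i) (σ j) ^ 2 = A i j := by
  have h := congrFun (hA (Pi.single (σ j) 1)) i
  rwa [permSquareMap_single, mulVec_single_one, mulVec_single_one] at h

theorem apply_mul_apply_eq_zero [CommRing R] [NoZeroDivisors R] [NeZero (2 : R)] {A : Matrix ι ι R}
    (hA : ∀ v, permSquareMap σ (A *ᵥ v) = A *ᵥ permSquareMap σ v) (i : ι) {j k : ι}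
    (hjk : j ≠ k) : A i j * A i k = 0 := by
  have hsplit : permSquareMap σ (A *ᵥ Pi.single j 1 + A *ᵥ Pi.single k 1) =
      permSquareMap σ (A *ᵥ Pi.single j 1) + permSquareMap σ (A *ᵥ Pi.single k 1) := by
    have hdisj : (Pi.single j 1 * Pi.single k 1 : ι → R) = 0 := by
      ext l
      by_cases hl : l = j <;> simp_all
    rw [← mulVec_add, hA, permSquareMap_add_of_mul_eq_zero hdisj, mulVec_add, hA, hA]
  have hi : (A i j + A i k) ^ 2 = A i j ^ 2 + A i k ^ 2 := by
    simpa [permSquareMap, mulVec_single_one] using congrFun hsplit (σ.symm i)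
  refine (mul_eq_zero.1 ?_).resolve_left (two_ne_zero (α := R))
  linear_combination hi

theorem existsUnique_apply_ne_zero [DecidableEq ι] [CommRing R] [IsDomain R] [NeZero (2 : R)]
    {A : Matrix ι ι R} (hunit : IsUnit A)
    (hA : ∀ v, permSquareMap σ (A *ᵥ v) = A *ᵥ permSquareMap σ v) (i : ι) :
    ∃! k, A i k ≠ 0 := by
  obtain ⟨k, hk⟩ : ∃ k, A i k ≠ 0 := by
    by_contra! hrow
    exact ((isUnit_iff_isUnit_det A).1 hunit).ne_zero (det_eq_zero_of_row_eq_zero i hrow)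
  refine ⟨k, hk, fun j hj => ?_⟩
  by_contra hjk
  exact mul_ne_zero hj hk (apply_mul_apply_eq_zero hA i hjk)

end PermSquareMap

section Generators

/-- The diagonal generator as a function of its parameter `x`, which is `ζ` in the theorem. -/
abbrev weightMatrix {R : Type*} [MonoidWithZero R] (x : R) : Matrix (Fin 3) (Fin 3) R :=
  diagonal ![1, x, x ^ 3]

/-- The permutation generator, which sends `(X, Y, Z)` to `(Y, Z, X)`. -/
abbrev shiftMatrix (R : Type*) [Zero R] [One R] : Matrix (Fin 3) (Fin 3) R :=
  !![0,1,0; 0,0,1; 1,0,0]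

variable {R : Type*} [CommSemiring R]

theorem weightMatrix_pow (x : R) (n : ℕ) : weightMatrix x ^ n = weightMatrix (x ^ n) := by
  rw [diagonal_pow]
  congr 1
  ext i
  fin_cases i <;> simp [pow_right_comm]

theorem shiftMatrix_pow_apply (k i j : Fin 3) :
    (shiftMatrix R ^ (k : ℕ)) i j = if j = i + k then 1 else 0 := by
  fin_cases k <;> fin_cases i <;> fin_cases j <;> simp [pow_two, mul_apply, Fin.sum_univ_three]

theorem shiftMatrix_pow_three : shiftMatrix R ^ 3 = 1 := by
  ext i j
  fin_cases i <;> fin_cases j <;> simp [pow_succ, mul_apply, Fin.sum_univ_three]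

theorem shiftMatrix_mul_weightMatrix {x : R} (hx : x ^ 7 = 1) :
    shiftMatrix R * weightMatrix x = x • (weightMatrix x ^ 2 * shiftMatrix R) := by
  have h3 : x * x ^ 2 = x ^ 3 := by ring
  have h7 : x * (x ^ 2) ^ 3 = 1 := by rw [← hx]; ring
  rw [weightMatrix_pow]
  ext i j
  fin_cases i <;> fin_cases j <;> simp [mul_apply, Fin.sum_univ_three, h3, h7]

theorem isUnit_weightMatrix {R : Type*} [CommRing R] {x : R} (hx : IsUnit x) :
    IsUnit (weightMatrix x) := by
  simp [isUnit_iff_isUnit_det, Fin.prod_univ_three, hx]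

theorem isUnit_shiftMatrix : IsUnit (shiftMatrix R) :=
  .of_pow_eq_one shiftMatrix_pow_three three_ne_zero

theorem apply_pow_eight {A : Matrix (Fin 3) (Fin 3) R}
    (hA : ∀ i j, A i j ^ 2 = A (i + 1) (j + 1)) (i j : Fin 3) : A i j ^ 8 = A i j := by
  have hcycle : ∀ l : Fin 3, l + 1 + 1 + 1 = l := by decide
  calc A i j ^ 8 = ((A i j ^ 2) ^ 2) ^ 2 := by ring
    _ = A i j := by rw [hA, hA, hA, hcycle, hcycle]

theorem eq_smul_weightMatrix_mul_shiftMatrix_pow {A : Matrix (Fin 3) (Fin 3) R}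
    (hA : ∀ i j, A i j ^ 2 = A (i + 1) (j + 1)) {k : Fin 3} (hk : ∀ j, A 0 j ≠ 0 → j = k) :
    A = A 0 k • (weightMatrix (A 0 k) * shiftMatrix R ^ (k : ℕ)) := by
  have hdiag : ∀ i l, A i (i + l) = A 0 l ^ 2 ^ (i : ℕ) := by
    intro i l
    fin_cases i
    · simp
    · simp [hA, add_comm]
    · simp [pow_mul _ 2 2, hA, add_comm, add_left_comm]
  ext i j
  obtain ⟨l, rfl⟩ : ∃ l, j = i + l := ⟨j - i, by simp⟩
  rw [hdiag, Matrix.smul_apply, diagonal_mul, shiftMatrix_pow_apply, smul_eq_mul]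
  simp only [add_right_inj]
  have h2 : A 0 k * A 0 k = A 0 k ^ 2 := (sq _).symm
  have h4 : A 0 k * A 0 k ^ 3 = A 0 k ^ 4 := (pow_succ' ..).symm
  by_cases hl : l = k
  · subst hl
    fin_cases i <;> simp [h2, h4]
  · simp [not_ne_iff.1 (mt (hk l) hl), hl]

end Generators

section ShiftSquareMap

variable {K : Type*} [Field K]

theorem orderOf_toPGL3_weightMatrix {x : K} (hx : IsUnit x) :
    orderOf (toPGL3 (weightMatrix x)) = orderOf x := by
  refine orderOf_eq_orderOf_iff.2 fun n => ?_
  rw [← toPGL3_pow (isUnit_weightMatrix hx), weightMatrix_pow,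
    toPGL3_eq_one_iff (isUnit_weightMatrix (hx.pow n))]
  constructor
  · rintro ⟨t, ht⟩
    have h0 : t = 1 := by simpa using congrFun₂ ht 0 0
    have h1 : t = x ^ n := by simpa using congrFun₂ ht 1 1
    rw [← h1, h0]
  · intro hn
    refine ⟨1, ?_⟩
    ext i j
    fin_cases i <;> fin_cases j <;> simp [hn]

theorem orderOf_toPGL3_shiftMatrix : orderOf (toPGL3 (shiftMatrix K)) = 3 := by
  refine orderOf_eq_prime ?_ ?_
  · rw [← toPGL3_pow isUnit_shiftMatrix, shiftMatrix_pow_three, toPGL3_eq_one_iff isUnit_one]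
    exact ⟨1, map_one _⟩
  · rw [Ne, toPGL3_eq_one_iff isUnit_shiftMatrix]
    rintro ⟨t, ht⟩
    simpa using congrFun₂ ht 0 1

theorem toPGL3_shiftMatrix_conj_weightMatrix {x : K} (hx : x ^ 7 = 1) :
    toPGL3 (shiftMatrix K) * toPGL3 (weightMatrix x) * (toPGL3 (shiftMatrix K))⁻¹ =
      toPGL3 (weightMatrix x) ^ 2 := by
  have hunit : IsUnit x := .of_pow_eq_one hx (by decide)
  have hW := isUnit_weightMatrix hunit
  rw [mul_inv_eq_iff_eq_mul, ← toPGL3_mul isUnit_shiftMatrix hW, shiftMatrix_mul_weightMatrix hx,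
    toPGL3_smul hunit.ne_zero ((hW.pow 2).mul isUnit_shiftMatrix),
    toPGL3_mul (hW.pow 2) isUnit_shiftMatrix, toPGL3_pow hW]

theorem permSquareMap_subRight_one (v : Fin 3 → K) :
    permSquareMap (Equiv.subRight 1) v = ![v 2 ^ 2, v 0 ^ 2, v 1 ^ 2] := by
  ext i
  fin_cases i <;> rfl

theorem toPGL3_weightMatrix_mem_autSubgroup {x : K} (hx : x ^ 7 = 1) :
    toPGL3 (weightMatrix x) ∈ autSubgroup (permSquareMap (Equiv.subRight 1)) := by
  have hunit : IsUnit x := .of_pow_eq_one hx (by decide)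
  refine toPGL3_mem_autSubgroup (isUnit_weightMatrix hunit)
    (pow_ne_zero 6 hunit.ne_zero) fun v => ?_
  have h0 : (x ^ 3 * v 2) ^ 2 = x ^ 6 * v 2 ^ 2 := by ring
  have h1 : v 0 ^ 2 = x ^ 6 * (x * v 0 ^ 2) := by linear_combination (-v 0 ^ 2) * hx
  have h2 : (x * v 1) ^ 2 = x ^ 6 * (x ^ 3 * v 1 ^ 2) := by
    linear_combination (-v 1 ^ 2 * x ^ 2) * hx
  ext i
  fin_cases i <;> simpa [permSquareMap_subRight_one, mulVec_diagonal]

theorem toPGL3_shiftMatrix_mem_autSubgroup :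
    toPGL3 (shiftMatrix K) ∈ autSubgroup (permSquareMap (Equiv.subRight 1)) := by
  refine toPGL3_mem_autSubgroup isUnit_shiftMatrix one_ne_zero fun v => ?_
  ext i
  fin_cases i <;> simp [permSquareMap_subRight_one, dotProduct, Fin.sum_univ_three]

theorem toPGL3_mem_closure_of_semiconj [NeZero (2 : K)] {ζ : K} (hζ : IsPrimitiveRoot ζ 7)
    {A : Matrix (Fin 3) (Fin 3) K} (hunit : IsUnit A)
    (hA : ∀ v, permSquareMap (Equiv.subRight 1) (A *ᵥ v) =
      A *ᵥ permSquareMap (Equiv.subRight 1) v) :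
    toPGL3 A ∈ Subgroup.closure {toPGL3 (weightMatrix ζ), toPGL3 (shiftMatrix K)} := by
  have hsq : ∀ i j, A i j ^ 2 = A (i + 1) (j + 1) := fun i j => by
    simpa using sq_apply_perm_eq hA (i + 1) (j + 1)
  obtain ⟨k, hk, hrow⟩ := existsUnique_apply_ne_zero hunit hA 0
  have hroot : A 0 k ^ 7 = 1 := by
    refine mul_right_cancel₀ hk ?_
    rw [← pow_succ, apply_pow_eight hsq, one_mul]
  obtain ⟨n, -, hn⟩ := hζ.eq_pow_of_pow_eq_one hroot
  have hW := isUnit_weightMatrix (hζ.isUnit (by decide))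
  rw [eq_smul_weightMatrix_mul_shiftMatrix_pow hsq hrow, ← hn, ← weightMatrix_pow,
    toPGL3_smul (hn ▸ hk) ((hW.pow n).mul (isUnit_shiftMatrix.pow _)),
    toPGL3_mul (hW.pow n) (isUnit_shiftMatrix.pow _), toPGL3_pow hW, toPGL3_pow isUnit_shiftMatrix]
  exact mul_mem (pow_mem (Subgroup.subset_closure (by simp)) _)
    (pow_mem (Subgroup.subset_closure (by simp)) _)

theorem autSubgroup_eq_closure [NeZero (2 : K)] {ζ : K} (hζ : IsPrimitiveRoot ζ 7) :
    autSubgroup (permSquareMap (Equiv.subRight 1)) =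
      Subgroup.closure {toPGL3 (weightMatrix ζ), toPGL3 (shiftMatrix K)} := by
  apply le_antisymm
  · intro φ hφ
    obtain ⟨A, hunit, rfl, hA⟩ := exists_semiconj_of_mem_autSubgroup permSquareMap_smul hφ
    exact toPGL3_mem_closure_of_semiconj hζ hunit hA
  · rw [Subgroup.closure_le, Set.pair_subset_iff]
    exact ⟨toPGL3_weightMatrix_mem_autSubgroup hζ.pow_eq_one, toPGL3_shiftMatrix_mem_autSubgroup⟩

theorem exists_closure_mulEquiv_semidirectProduct {ζ : K} (hζ : IsPrimitiveRoot ζ 7) :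
    ∃ ψ : Multiplicative (ZMod 3) →* MulAut (Multiplicative (ZMod 7)), ψ ≠ 1 ∧
      Nonempty (Subgroup.closure {toPGL3 (weightMatrix ζ), toPGL3 (shiftMatrix K)} ≃*
        Multiplicative (ZMod 7) ⋊[ψ] Multiplicative (ZMod 3)) := by
  have ha : orderOf (toPGL3 (weightMatrix ζ)) = 7 := by
    rw [orderOf_toPGL3_weightMatrix (hζ.isUnit (by decide)), hζ.eq_orderOf]
  have hb := orderOf_toPGL3_shiftMatrix (K := K)
  have hconj := toPGL3_shiftMatrix_conj_weightMatrix hζ.pow_eq_one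
  refine exists_closure_pair_mulEquiv_semidirectProduct ha hb ?_ ?_ fun hcomm => ?_
  · refine mem_normalizer_zpowers (orderOf_pos_iff.1 (by simp [ha])) ?_
    exact hconj ▸ pow_mem (Subgroup.mem_zpowers _) 2
  · refine Subgroup.disjoint_of_coprime_natCard ?_
    rw [Nat.card_zpowers, Nat.card_zpowers, ha, hb]
    decide
  · rw [← hcomm.eq, mul_inv_cancel_right, sq, left_eq_mul, ← orderOf_eq_one_iff, ha] at hconj
    contradiction

end ShiftSquareMap

theorem stmt6_general {K : Type*} [Field K] [NeZero (2 : K)] (ζ : K) (hζ : IsPrimitiveRoot ζ 7) :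
    let H : Subgroup (PGL3 K) :=
      Subgroup.closure
        {toPGL3 (Matrix.diagonal ![1, ζ, ζ ^ 3]), toPGL3 !![0,1,0; 0,0,1; 1,0,0]}
    AutQ (fun v : Fin 3 → K => ![v 2 ^ 2, v 0 ^ 2, v 1 ^ 2]) = ↑H ∧
      Nat.card H = 21 ∧
      ∃ ψ : Multiplicative (ZMod 3) →* MulAut (Multiplicative (ZMod 7)),
        ψ ≠ 1 ∧
          Nonempty (H ≃* (Multiplicative (ZMod 7) ⋊[ψ] Multiplicative (ZMod 3))) := by
  intro H
  obtain ⟨ψ, hψ, ⟨e⟩⟩ := exists_closure_mulEquiv_semidirectProduct hζ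
  refine ⟨?_, ?_, ψ, hψ, ⟨e⟩⟩
  · rw [← _root_.funext permSquareMap_subRight_one]
    exact congrArg SetLike.coe (autSubgroup_eq_closure hζ)
  · rw [Nat.card_congr e.toEquiv, SemidirectProduct.card]
    simp

theorem stmt6 {K : Type*} [Field K] [IsAlgClosed K] [CharZero K]
    (ζ : K) (hζ : IsPrimitiveRoot ζ 7) :
    let H : Subgroup (PGL3 K) :=
      Subgroup.closure
        {toPGL3 (Matrix.diagonal ![1, ζ, ζ ^ 3]), toPGL3 !![0,1,0; 0,0,1; 1,0,0]}
    AutQ (fun v : Fin 3 → K => ![v 2 ^ 2, v 0 ^ 2, v 1 ^ 2]) = ↑H ∧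
      Nat.card H = 21 ∧
      ∃ ψ : Multiplicative (ZMod 3) →* MulAut (Multiplicative (ZMod 7)),
        ψ ≠ 1 ∧
          Nonempty (H ≃* (Multiplicative (ZMod 7) ⋊[ψ] Multiplicative (ZMod 3))) :=
  stmt6_general ζ hζ
end
end

section
/- Let K be an algebraically closed field of characteristic 0, let p ≥ 3 be prime, and let F = (F₀, F₁, F₂) be a triple of homogeneous polynomials of degree 2 in K[X,Y,Z], not all zero. If Aut(F) contains a subgroup isomorphic to (ℤ/pℤ) × (ℤ/pℤ), then either F₀, F₁, F₂ are algebraically dependent over K (the induced rational self-map of P² is not dominant), or there exist homogeneous linear forms L, L₀, L₁, L₂ ∈ K[X,Y,Z] with Fᵢ = L·Lᵢ for i = 0, 1, 2 (the induced rational self-map of P² is a linear map). -/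
open Matrix MvPolynomial
open scoped Classical

noncomputable section

/-!
In degree 2 an automorphism `[M]` of `F` has exactly one representative with `F ∘ M = M ∘ F`:
replace `M` by `c⁻¹ M`; a nonzero scalar `l` with `l² = l` is `1`. So a subgroup `(ℤ/n)^r` of
`PGL_{r+1}` of such automorphisms lifts to `GL_{r+1}`, where it can be diagonalised simultaneously.
Together with the scalar `n`-th roots of unity the lift has `n ^ (r + 1)` elements, hence is the
whole `n`-torsion of the diagonal torus. In eigencoordinates `F` is thus a map `G` that commutes,
up to scalars, with every diagonal matrix of `n`-th roots of unity: whenever `x^m` occurs in `Gᵢ`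
and `x^m'` in `Gᵢ'`, the exponents of `x^m xᵢ'` and `x^m' xᵢ` agree modulo `n`. As `2 < n`, either
some `Gᵢ` vanishes, and `F` is linearly dependent, or `Gᵢ = cᵢ x^u xᵢ` with the same `u` for all
`i`.
-/

open scoped MatrixGroups

section Diagonalization

variable {K V : Type*} [Field K] [AddCommGroup V] [Module K V] {n : ℕ} {ζ : K}

theorem ker_aeval_prod_X_sub_C_le (f : Module.End K V) (s : Finset K) :
    LinearMap.ker (Polynomial.aeval f (∏ μ ∈ s, (Polynomial.X - Polynomial.C μ))) ≤
      ⨆ μ, f.eigenspace μ := by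
  induction s using Finset.induction_on with
  | empty => simp [Module.End.one_eq_id]
  | insert μ s hμ ih =>
    have hcoprime : IsCoprime (Polynomial.X - Polynomial.C μ)
        (∏ ν ∈ s, (Polynomial.X - Polynomial.C ν)) :=
      IsCoprime.prod_right fun ν hν =>
        Polynomial.isCoprime_X_sub_C_of_isUnit_sub
          (sub_ne_zero.2 (ne_of_mem_of_not_mem hν hμ).symm).isUnit
    rw [Finset.prod_insert hμ, ← Polynomial.sup_ker_aeval_eq_ker_aeval_mul_of_coprime f hcoprime]
    refine sup_le (le_iSup_of_le μ ?_) ih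
    simp [Module.End.eigenspace_def, Algebra.algebraMap_eq_smul_one]

theorem iSup_eigenspace_eq_top_of_pow_eq_one [NeZero n] (hζ : IsPrimitiveRoot ζ n)
    {f : Module.End K V} (hf : f ^ n = 1) : ⨆ μ, f.eigenspace μ = ⊤ := by
  rw [eq_top_iff]
  refine le_trans ?_ (ker_aeval_prod_X_sub_C_le f (Polynomial.nthRootsFinset n 1))
  rw [← Polynomial.X_pow_sub_one_eq_prod (NeZero.pos n) hζ]
  simp [hf]

theorem isSemisimple_of_pow_eq_one [NeZero (n : K)] {f : Module.End K V} (hf : f ^ n = 1) :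
    f.IsSemisimple :=
  Module.End.isSemisimple_of_squarefree_aeval_eq_zero
    (Polynomial.X_pow_sub_one_separable_iff.2 (NeZero.ne (n : K))).squarefree (by simp [hf])

theorem iSup_iInf_eigenspace_eq_top_of_pow_eq_one [FiniteDimensional K V] [NeZero n]
    (hζ : IsPrimitiveRoot ζ n) {κ : Type*} {f : κ → Module.End K V} (hf : ∀ a, f a ^ n = 1)
    (hcomm : ∀ a b, Commute (f a) (f b)) :
    ⨆ χ : κ → K, ⨅ a, (f a).eigenspace (χ a) = ⊤ := by
  have : NeZero (n : K) := hζ.neZero'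
  have hgen a μ : (f a).maxGenEigenspace μ = (f a).eigenspace μ :=
    (isSemisimple_of_pow_eq_one (hf a)).isFinitelySemisimple.maxGenEigenspace_eq_eigenspace μ
  simpa only [hgen] using
    Module.End.iSup_iInf_maxGenEigenspace_eq_top_of_iSup_maxGenEigenspace_eq_top_of_commute f
      (fun a b _ => hcomm a b) fun a => by
        simpa only [hgen] using iSup_eigenspace_eq_top_of_pow_eq_one hζ (hf a)

theorem exists_basis_forall_mem_of_span_eq_top {ι : Type*} [Fintype ι] [FiniteDimensional K V]
    (hι : Fintype.card ι = Module.finrank K V) {s : Set V} (hs : Submodule.span K s = ⊤) :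
    ∃ b : Module.Basis ι K V, ∀ i, b i ∈ s := by
  obtain ⟨g, hgs, hspan, hli⟩ := Submodule.exists_fun_fin_finrank_span_eq K s
  have hcard : Fintype.card ι = Module.finrank K (Submodule.span K s) := by
    rw [hι, hs, finrank_top]
  let b := (Module.Basis.mk hli (hspan.trans hs).ge).reindex (Fintype.equivFinOfCardEq hcard).symm
  exact ⟨b, fun i => by simpa [b] using hgs _⟩

theorem exists_eigenbasis_of_pow_eq_one {ι : Type*} [Fintype ι] [FiniteDimensional K V]
    (hι : Fintype.card ι = Module.finrank K V) [NeZero n]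
    (hζ : IsPrimitiveRoot ζ n) {κ : Type*} {f : κ → Module.End K V} (hf : ∀ a, f a ^ n = 1)
    (hcomm : ∀ a b, Commute (f a) (f b)) :
    ∃ (b : Module.Basis ι K V) (χ : κ → ι → K), ∀ a i, (f a).HasEigenvector (χ a i) (b i) := by
  have hspan : Submodule.span K
      (⋃ χ : κ → K, ((⨅ a, (f a).eigenspace (χ a) : Submodule K V) : Set V)) = ⊤ := by
    rw [← Submodule.iSup_eq_span, iSup_iInf_eigenspace_eq_top_of_pow_eq_one hζ hf hcomm]
  obtain ⟨b, hb⟩ := exists_basis_forall_mem_of_span_eq_top hι hspan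
  simp only [Set.mem_iUnion, SetLike.mem_coe, Submodule.mem_iInf] at hb
  choose χ hχ using hb
  exact ⟨b, fun a i => χ i a, fun a i => ⟨hχ i a, b.ne_zero i⟩⟩

theorem pow_eq_one_of_hasEigenvector {f : Module.End K V} (hf : f ^ n = 1) {μ : K} {v : V}
    (hv : f.HasEigenvector μ v) : μ ^ n = 1 := by
  have h : μ ^ n • v = (1 : K) • v := by
    rw [← hv.pow_apply n, hf, Module.End.one_apply, one_smul]
  exact smul_left_injective K hv.2 h

theorem exists_diagonalization_of_pow_eq_one {ι : Type*} [Fintype ι] [DecidableEq ι] [NeZero n]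
    (hζ : IsPrimitiveRoot ζ n) {κ : Type*} {A : κ → GL ι K} (hA : ∀ a, A a ^ n = 1)
    (hcomm : ∀ a b, Commute (A a) (A b)) :
    ∃ (Q : GL ι K) (χ : κ → ι → rootsOfUnity n K),
      ∀ a, (A a).val * Q.val = Q.val * diagonal fun i => ((χ a i).val : K) := by
  let f a := Matrix.toLinAlgEquiv' (A a).val
  have hf a : f a ^ n = 1 := by
    rw [← map_pow, ← Units.val_pow_eq_pow_val, hA, Units.val_one, map_one]
  have hfcomm a b : Commute (f a) (f b) := ((hcomm a b).map (Units.coeHom _)).map _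
  obtain ⟨b, μ, hb⟩ := exists_eigenbasis_of_pow_eq_one (ι := ι) (by simp) hζ hf hfcomm
  have hμ a i : μ a i ^ n = 1 := pow_eq_one_of_hasEigenvector (hf a) (hb a i)
  let Q : GL ι K :=
    ⟨(Pi.basisFun K ι).toMatrix b, b.toMatrix (Pi.basisFun K ι),
      Module.Basis.toMatrix_mul_toMatrix_flip _ _, Module.Basis.toMatrix_mul_toMatrix_flip _ _⟩
  refine ⟨Q, fun a i => rootsOfUnity.mkOfPowEq (μ a i) (hμ a i), fun a => ?_⟩
  ext i j
  have hij := congrFun (hb a j).apply_eq_smul i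
  rw [Matrix.mul_diagonal]
  simpa [Q, f, Matrix.mul_apply, mulVec, dotProduct, Module.Basis.toMatrix_apply, mul_comm]
    using hij

end Diagonalization

section PolyMap

theorem eval_bind₁ {σ τ R : Type*} [CommSemiring R] (g : σ → MvPolynomial τ R) (v : τ → R)
    (P : MvPolynomial σ R) : eval v (bind₁ g P) = eval (fun i => eval v (g i)) P :=
  eval₂Hom_bind₁ _ _ _ _

variable {K ι : Type*} [Field K]

/-- The polynomial self-map of `K^ι` with coordinates `F`. -/
def polyMap (F : ι → MvPolynomial ι K) (v : ι → K) : ι → K := fun i => eval v (F i)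

theorem polyMap_injective [Infinite K] : Function.Injective (polyMap (K := K) (ι := ι)) :=
  fun _ _ h => _root_.funext fun i => MvPolynomial.funext fun v => congrFun (congrFun h v) i

theorem polyMap_smul {d : ℕ} {F : ι → MvPolynomial ι K} (hF : ∀ i, (F i).IsHomogeneous d)
    (l : K) (v : ι → K) : polyMap F (l • v) = l ^ d • polyMap F v := by
  ext i
  simp only [polyMap, Pi.smul_apply, smul_eq_mul, eval_eq, Finset.mul_sum]
  refine Finset.sum_congr rfl fun m hm => ?_
  have hdeg : m.degree = d := by
    rw [Finsupp.degree_eq_weight_one]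
    exact hF i (mem_support_iff.1 hm)
  rw [← hdeg, Finsupp.degree_apply, Finset.prod_congr rfl fun j _ => mul_pow l (v j) (m j),
    Finset.prod_mul_distrib, Finset.prod_pow_eq_pow_sum]
  ring

end PolyMap

section ProjAut

variable {K ι : Type*} [Field K] [Fintype ι] [DecidableEq ι]

/-- The automorphism group of the self-map `f` of `K^ι`, as a set of classes in `PGL(ι, K)`: those
`[M]` with `f ∘ M = c M ∘ f` for some `c ≠ 0`. For `ι = Fin 3` this is `AutQ`. -/
def projAut (f : (ι → K) → ι → K) : Set PGL(ι, K) :=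
  {φ | ∃ M : GL ι K, ProjGenLinGroup.mk M = φ ∧
    ∃ c : K, c ≠ 0 ∧ ∀ v, f (M.val *ᵥ v) = c • (M.val *ᵥ f v)}

/-- The matrices that commute with `f` exactly, not just up to a scalar. For quadratic `f` they give
a canonical lift of `projAut f` to `GL ι K`. -/
def equivariantGroup (f : (ι → K) → ι → K) : Subgroup (GL ι K) where
  carrier := {M | ∀ v, f (M.val *ᵥ v) = M.val *ᵥ f v}
  one_mem' v := by simp
  mul_mem' hM hN v := by
    rw [Units.val_mul, ← mulVec_mulVec, hM, hN, mulVec_mulVec]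
  inv_mem' {M} hM v := by
    have h := hM (M⁻¹.val *ᵥ v)
    rw [mulVec_mulVec, Units.mul_inv, one_mulVec] at h
    rw [h, mulVec_mulVec, Units.inv_mul, one_mulVec]

variable {f : (ι → K) → ι → K} (hf : ∀ (l : K) v, f (l • v) = l ^ 2 • f v)
include hf

theorem exists_mem_equivariantGroup_mk_eq {φ : PGL(ι, K)} (hφ : φ ∈ projAut f) :
    ∃ M ∈ equivariantGroup f, ProjGenLinGroup.mk M = φ := by
  obtain ⟨M, rfl, c, hc, hM⟩ := hφ
  refine ⟨GeneralLinearGroup.scalar ι (Units.mk0 c hc)⁻¹ * M, fun v => ?_, by simp⟩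
  simp only [Units.val_mul, GeneralLinearGroup.coe_scalar, ← mulVec_mulVec, scalar_apply,
    ← smul_one_eq_diagonal, smul_mulVec, one_mulVec, Units.val_inv_eq_inv_val, Units.val_mk0]
  rw [hf, hM, smul_smul]
  congr 1
  field_simp

theorem injective_mk_domRestrict_equivariantGroup (hf0 : f ≠ 0) :
    Function.Injective (ProjGenLinGroup.mk.domRestrict (equivariantGroup f)) := by
  refine (injective_iff_map_eq_one _).2 fun ⟨M, hM⟩ hM1 => Subtype.ext ?_
  rw [MonoidHom.domRestrict_apply, ProjGenLinGroup.mk_eq_one,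
    GeneralLinearGroup.center_eq_range_scalar] at hM1
  obtain ⟨l, rfl⟩ := hM1
  obtain ⟨v, hv⟩ := Function.ne_iff.1 hf0
  have h := hM v
  simp only [GeneralLinearGroup.coe_scalar, scalar_apply, ← smul_one_eq_diagonal, smul_mulVec,
    one_mulVec, hf, pow_two, mul_smul] at h
  have hl : (l : K) = 1 := smul_left_injective K hv <| by
    simpa using smul_right_injective _ l.ne_zero h
  simp [Units.val_eq_one.1 hl]

theorem exists_lift_equivariantGroup (hf0 : f ≠ 0) {H : Subgroup PGL(ι, K)}
    (hH : (H : Set PGL(ι, K)) ⊆ projAut f) :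
    ∃ ρ : H →* GL ι K, ∀ h, ρ h ∈ equivariantGroup f ∧ ProjGenLinGroup.mk (ρ h) = h := by
  let π := ProjGenLinGroup.mk.domRestrict (equivariantGroup f)
  have hle : H ≤ π.range := fun φ hφ => by
    obtain ⟨M, hM, hMφ⟩ := exists_mem_equivariantGroup_mk_eq hf (hH hφ)
    exact ⟨⟨M, hM⟩, hMφ⟩
  let e := MonoidHom.ofInjective (injective_mk_domRestrict_equivariantGroup hf hf0)
  refine ⟨(equivariantGroup f).subtype.comp (e.symm.toMonoidHom.comp (Subgroup.inclusion hle)),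
    fun h => ⟨SetLike.coe_mem _, ?_⟩⟩
  exact congrArg Subtype.val (e.apply_symm_apply (Subgroup.inclusion hle h))

end ProjAut

section Counting

variable {K ι : Type*} [Field K] [Fintype ι] [DecidableEq ι]

theorem mk_eq_mk_of_mul_eq_mul_diagonal {M N Q : GL ι K} {x y : ι → K} {l : Kˣ}
    (hM : M.val * Q.val = Q.val * diagonal x) (hN : N.val * Q.val = Q.val * diagonal y)
    (hxy : y = l.val • x) : ProjGenLinGroup.mk M = ProjGenLinGroup.mk N := by
  refine ProjGenLinGroup.mk_eq_mk_iff.2 ⟨l, ?_⟩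
  rw [← GeneralLinearGroup.scalar_commute]
  refine mul_right_cancel (b := Q) (Units.ext ?_)
  simp only [Units.val_mul, hN, GeneralLinearGroup.coe_scalar, mul_assoc, hM, hxy, scalar_apply,
    ← smul_one_eq_diagonal, diagonal_smul, Matrix.mul_smul, Matrix.smul_mul, one_mul]

theorem exists_eq_smul_of_natCard_mul_eq [Nonempty ι] {n : ℕ} [NeZero n]
    [HasEnoughRootsOfUnity K n] {A : Type*} (hA : Nat.card A * n = n ^ Fintype.card ι)
    {ρ : A → GL ι K} (hρ : Function.Injective fun a => ProjGenLinGroup.mk (ρ a)) {Q : GL ι K}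
    {χ : A → ι → rootsOfUnity n K}
    (hχ : ∀ a, (ρ a).val * Q.val = Q.val * diagonal fun i => ((χ a i).val : K))
    (t : ι → rootsOfUnity n K) : ∃ (a : A) (ω : rootsOfUnity n K), t = ω • χ a := by
  have : Finite A := (Nat.card_ne_zero.1
    (left_ne_zero_of_mul (hA.trans_ne (pow_ne_zero _ (NeZero.ne n))))).2
  let g : A × rootsOfUnity n K → ι → rootsOfUnity n K := fun aω => aω.2 • χ aω.1
  have hinj : Function.Injective g := by
    rintro ⟨a, ω⟩ ⟨b, ω'⟩ (h : ω • χ a = ω' • χ b)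
    obtain ⟨i⟩ := ‹Nonempty ι›
    obtain rfl : a = b := hρ <| mk_eq_mk_of_mul_eq_mul_diagonal (hχ a) (hχ b)
      (l := (ω'⁻¹ * ω).val) <| by
        have hb : χ b = (ω'⁻¹ * ω) • χ a := by rw [mul_smul, h, inv_smul_smul]
        ext j
        simp [hb]
    exact Prod.ext rfl (mul_right_cancel (congrFun h i))
  have hcard : Nat.card (A × rootsOfUnity n K) = Nat.card (ι → rootsOfUnity n K) := by
    rw [Nat.card_prod, Nat.card_fun, HasEnoughRootsOfUnity.natCard_rootsOfUnity, hA,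
      Nat.card_eq_fintype_card]
  obtain ⟨⟨a, ω⟩, h⟩ := ((Nat.bijective_iff_injective_and_card g).2 ⟨hinj, hcard⟩).2 t
  exact ⟨a, ω, h.symm⟩

end Counting

section LinearConj

variable {K ι : Type*} [Field K] [Fintype ι] [DecidableEq ι]

/-- The coordinates `Q⁻¹ ∘ F ∘ Q` of the self-map `F` in the basis formed by the columns of `Q`. -/
def linearConj (Q : GL ι K) (F : ι → MvPolynomial ι K) : ι → MvPolynomial ι K :=
  fun i => ∑ l, C (Q⁻¹.val i l) * bind₁ Q.val.toMvPolynomial (F l)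

variable {F : ι → MvPolynomial ι K} {Q : GL ι K}

theorem polyMap_linearConj (v : ι → K) :
    polyMap (linearConj Q F) v = Q⁻¹.val *ᵥ polyMap F (Q.val *ᵥ v) := by
  ext i
  simp only [polyMap, linearConj, map_sum, map_mul, eval_C, eval_bind₁,
    toMvPolynomial_eval_eq_apply, mulVec, dotProduct]
  rfl

theorem linearConj_inv_linearConj [Infinite K] : linearConj Q⁻¹ (linearConj Q F) = F := by
  refine polyMap_injective (_root_.funext fun v => ?_)
  simp only [polyMap_linearConj, mulVec_mulVec, inv_inv, Units.mul_inv, one_mulVec]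

theorem isHomogeneous_linearConj {d : ℕ} (hF : ∀ i, (F i).IsHomogeneous d) (i : ι) :
    (linearConj Q F i).IsHomogeneous d :=
  IsHomogeneous.sum _ _ _ fun l _ => IsHomogeneous.C_mul
    (by simpa using (hF l).aeval _ Q.val.toMvPolynomial_isHomogeneous) _

theorem linearConj_mul (L : MvPolynomial ι K) (P : ι → MvPolynomial ι K) (i : ι) :
    linearConj Q (fun l => L * P l) i =
      bind₁ Q.val.toMvPolynomial L * linearConj Q P i := by
  simp only [linearConj, map_mul, Finset.mul_sum, mul_left_comm]

theorem linearConj_ne_zero [Infinite K] (hF : LinearIndependent K F) (i : ι) :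
    linearConj Q F i ≠ 0 := by
  intro h
  have hrel : ∑ l, Q⁻¹.val i l • F l = 0 := MvPolynomial.funext fun w => by
    have hw := congrFun (polyMap_linearConj (F := F) (Q := Q) (Q⁻¹.val *ᵥ w)) i
    rw [mulVec_mulVec, Units.mul_inv, one_mulVec, polyMap, h, map_zero] at hw
    simpa [mulVec, dotProduct, polyMap, smul_eval] using hw.symm
  have hrow : Q⁻¹.val i = 0 := _root_.funext (Fintype.linearIndependent_iff.1 hF _ hrel)
  have hone : (Q⁻¹.val i ᵥ* Q.val) i = 1 := by
    rw [← mul_apply_eq_vecMul, Units.inv_mul, one_apply_eq]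
  rw [hrow, zero_vecMul] at hone
  exact zero_ne_one hone

theorem polyMap_linearConj_mul {M : GL ι K} (hM : M ∈ equivariantGroup (polyMap F))
    {x : ι → K} (hMQ : M.val * Q.val = Q.val * diagonal x) (v : ι → K) :
    polyMap (linearConj Q F) (x * v) = x * polyMap (linearConj Q F) v := by
  have hdiag w : x * w = diagonal x *ᵥ w := by ext i; simp [mulVec_diagonal]
  have hQM : Q⁻¹.val * M.val = diagonal x * Q⁻¹.val := by
    rw [Units.eq_mul_inv_iff_mul_eq, mul_assoc, hMQ, Units.inv_mul_cancel_left]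
  rw [hdiag, hdiag, polyMap_linearConj, polyMap_linearConj, mulVec_mulVec, ← hMQ, ← mulVec_mulVec,
    hM, mulVec_mulVec, hQM, mulVec_mulVec]

end LinearConj

section Monomials

variable {ι R : Type*} [Fintype ι] [CommSemiring R]

theorem apply_self_ne_zero_of_modEq {n d : ℕ} (hι : 3 ≤ Fintype.card ι) (hd : d ≠ 0) (hdn : d < n)
    {m : ι → ι →₀ ℕ} (hm : ∀ i, (m i).degree = d)
    (hmod : ∀ i j, i ≠ j → m i j + 1 ≡ m j j [MOD n]) (j : ι) : m j j ≠ 0 := by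
  intro hj
  -- Then `n ∣ m i j + 1 ≤ n` forces `m i = d • e_j` for each of the other (at least two) `i`.
  have hpow {i} (hij : i ≠ j) : m i j = d := by
    have hdvd : n ∣ m i j + 1 := Nat.modEq_zero_iff_dvd.1 (hj ▸ hmod i j hij)
    have hn := Nat.le_of_dvd (Nat.succ_pos _) hdvd
    have hle : m i j ≤ d := hm i ▸ Finsupp.le_degree j (m i)
    omega
  have hzero {i k} (hij : i ≠ j) (hkj : k ≠ j) : m i k = 0 := by
    have hsum : ∑ l ∈ {j, k}, m i l ≤ (m i).degree := by
      rw [Finsupp.degree_eq_sum]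
      exact Finset.sum_le_univ_sum_of_nonneg fun _ => Nat.zero_le _
    rw [Finset.sum_pair hkj.symm, hpow hij, hm i] at hsum
    omega
  obtain ⟨i, hij⟩ : ∃ i, i ≠ j := Fintype.exists_ne_of_one_lt_card (by omega) j
  obtain ⟨k, hkj, hki⟩ : ∃ k, k ≠ j ∧ k ≠ i := by
    have hcard : ({j, i} : Finset ι).card < Fintype.card ι := Finset.card_le_two.trans_lt hι
    obtain ⟨k, hk⟩ := Finset.exists_mem_notMem_of_card_lt_card hcard
    exact ⟨k, by simpa using hk.2⟩
  have hone : 1 ≡ 0 [MOD n] := by simpa [hzero hkj hij, hzero hij hij] using hmod k i hki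
  have hn := Nat.le_of_dvd one_pos (Nat.modEq_zero_iff_dvd.1 hone)
  omega

theorem exists_eq_add_single_of_modEq {n d : ℕ} (hι : 3 ≤ Fintype.card ι) (hd : d ≠ 0)
    (hdn : d < n) {m : ι → ι →₀ ℕ} (hm : ∀ i, (m i).degree = d)
    (hmod : ∀ i i' j, m i j + Finsupp.single i' 1 j ≡ m i' j + Finsupp.single i 1 j [MOD n]) :
    ∃ u : ι →₀ ℕ, u.degree + 1 = d ∧ ∀ i, m i = u + Finsupp.single i 1 := by
  have hle i j : m i j ≤ d := hm i ▸ Finsupp.le_degree j (m i)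
  have hoff i j (hij : i ≠ j) : m i j + 1 ≡ m j j [MOD n] := by
    simpa [Finsupp.single_apply, hij] using hmod i j j
  have hdiag := apply_self_ne_zero_of_modEq hι hd hdn hm hoff
  have hoff_eq {i j} (hij : i ≠ j) : m i j + 1 = m j j := by
    obtain ⟨k, hk⟩ := Nat.exists_eq_add_one_of_ne_zero (hdiag j)
    have hmodk : m i j ≡ k [MOD n] := Nat.ModEq.add_right_cancel' 1 (hk ▸ hoff i j hij)
    have hij_le := hle i j
    have hjj_le := hle j j
    rw [hk, hmodk.eq_of_lt_of_lt (by omega) (by omega)]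
  let u : ι →₀ ℕ := Finsupp.equivFunOnFinite.symm fun j => m j j - 1
  have hu i : m i = u + Finsupp.single i 1 := by
    ext j
    change m i j = m j j - 1 + Finsupp.single i 1 j
    by_cases hij : i = j
    · rw [hij, Finsupp.single_eq_same, Nat.sub_one_add_one (hdiag j)]
    · rw [Finsupp.single_eq_of_ne' hij, add_zero, ← hoff_eq hij, Nat.add_sub_cancel]
  obtain ⟨i⟩ : Nonempty ι := Fintype.card_pos_iff.1 (by omega)
  exact ⟨u, by simpa [hu i] using hm i, hu⟩

theorem exists_eq_monomial_add_single {n d : ℕ} (hι : 3 ≤ Fintype.card ι) (hd : d ≠ 0)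
    (hdn : d < n) {G : ι → MvPolynomial ι R} (hG : ∀ i, (G i).IsHomogeneous d) (hG0 : ∀ i, G i ≠ 0)
    (hmod : ∀ i i' m m', coeff m (G i) ≠ 0 → coeff m' (G i') ≠ 0 →
      ∀ j, m j + Finsupp.single i' 1 j ≡ m' j + Finsupp.single i 1 j [MOD n]) :
    ∃ (u : ι →₀ ℕ) (c : ι → R), u.degree + 1 = d ∧
      ∀ i, G i = monomial (u + Finsupp.single i 1) (c i) := by
  have hdeg {i m} (hm : coeff m (G i) ≠ 0) : m.degree = d := by
    rw [Finsupp.degree_eq_weight_one]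
    exact hG i hm
  choose m hm using fun i => ne_zero_iff.1 (hG0 i)
  obtain ⟨u, hu, hmu⟩ := exists_eq_add_single_of_modEq hι hd hdn (fun i => hdeg (hm i))
    fun i i' => hmod i i' _ _ (hm i) (hm i')
  refine ⟨u, fun i => coeff (m i) (G i), hu, fun i => ?_⟩
  have huniq {m'} (hm' : coeff m' (G i) ≠ 0) : m' = m i := by
    ext j
    have hj : m' j ≡ m i j [MOD n] := Nat.ModEq.add_right_cancel' _ (hmod i i _ _ hm' (hm i) j)
    have hlt {m''} (hm'' : coeff m'' (G i) ≠ 0) : m'' j < n :=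
      ((Finsupp.le_degree j m'').trans (hdeg hm'').le).trans_lt hdn
    exact hj.eq_of_lt_of_lt (hlt hm') (hlt (hm i))
  ext m'
  rw [← hmu, coeff_monomial]
  split_ifs with h
  · subst h; rfl
  · exact not_not.1 fun hm' => h (huniq hm').symm

end Monomials

section Torus

variable {K ι : Type*} [Field K]

theorem coeff_bind₁_C_mul_X [Fintype ι] (t : ι → K) (P : MvPolynomial ι K) (m : ι →₀ ℕ) :
    coeff m (bind₁ (fun i => C (t i) * X i) P) = (∏ i, t i ^ m i) * coeff m P := by
  induction P using MvPolynomial.induction_on' with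
  | monomial u a =>
    have hu : bind₁ (fun i => C (t i) * X i) (monomial u a) =
        monomial u ((∏ i, t i ^ u i) * a) := by
      simp only [monomial_eq, Finsupp.prod_fintype, pow_zero, implies_true, map_mul, map_prod,
        map_pow, bind₁_C_right, bind₁_X_right, mul_pow, Finset.prod_mul_distrib]
      ring
    rw [hu, coeff_monomial, coeff_monomial]
    split_ifs with h
    · rw [h]
    · simp
  | add P P' hP hP' => rw [map_add, coeff_add, coeff_add, hP, hP', mul_add]

theorem prod_pow_eq_of_eval_mul_eq [Fintype ι] [Infinite K] {P : MvPolynomial ι K}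
    {t : ι → K} {c : K} (hP : ∀ v, eval (t * v) P = c * eval v P) {m : ι →₀ ℕ}
    (hm : coeff m P ≠ 0) :
    ∏ i, t i ^ m i = c := by
  have hbind : bind₁ (fun i => C (t i) * X i) P = C c * P := by
    refine MvPolynomial.funext fun v => ?_
    rw [map_mul, eval_C, ← hP v, eval_bind₁]
    simp [Pi.mul_def]
  refine mul_right_cancel₀ hm ?_
  rw [← coeff_bind₁_C_mul_X, hbind, coeff_C_mul]

theorem modEq_of_forall_torus [Finite ι] [Infinite K] {n : ℕ} [NeZero n] {ζ : K}
    (hζ : IsPrimitiveRoot ζ n) {G : ι → MvPolynomial ι K}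
    (hG : ∀ t : ι → K, (∀ i, t i ^ n = 1) →
      ∃ c : K, ∀ v, polyMap G (t * v) = c • (t * polyMap G v))
    {i i' : ι} {m m' : ι →₀ ℕ} (hm : coeff m (G i) ≠ 0) (hm' : coeff m' (G i') ≠ 0) (j : ι) :
    m j + Finsupp.single i' 1 j ≡ m' j + Finsupp.single i 1 j [MOD n] := by
  have := Fintype.ofFinite ι
  let t : ι → K := Pi.mulSingle j ζ
  have ht i : t i = ζ ^ Finsupp.single i 1 j := by
    by_cases hij : i = j
    · simp [t, hij]
    · simp [t, hij]
  obtain ⟨c, hc⟩ := hG t fun i => by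
    rw [ht, ← pow_mul, mul_comm, pow_mul, hζ.pow_eq_one, one_pow]
  have hcoeff {i m} (hm : coeff m (G i) ≠ 0) : ζ ^ m j = c * t i := by
    have hprod : ∏ k, t k ^ m k = c * t i := prod_pow_eq_of_eval_mul_eq
      (fun v => by simpa [polyMap, mul_assoc] using congrFun (hc v) i) hm
    rwa [Finset.prod_eq_single j (fun k _ hkj => by simp [t, hkj]) (by simp),
      (by simp [t] : t j = ζ)] at hprod
  have hpow : ζ ^ (m j + Finsupp.single i' 1 j) = ζ ^ (m' j + Finsupp.single i 1 j) := by
    rw [pow_add, pow_add, hcoeff hm, hcoeff hm', ← ht, ← ht, mul_right_comm]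
  rwa [(hζ.isOfFinOrder (NeZero.ne n)).pow_eq_pow_iff_modEq, ← hζ.eq_orderOf] at hpow

end Torus

section Main

variable {K ι : Type*} [Field K] [Infinite K] [Fintype ι] [DecidableEq ι]

theorem exists_linearConj_torus_equivariant {n : ℕ} [NeZero n]
    [HasEnoughRootsOfUnity K n] {F : ι → MvPolynomial ι K} (hF : ∀ i, (F i).IsHomogeneous 2)
    (hF0 : F ≠ 0) {H : Subgroup PGL(ι, K)} (hH : (H : Set PGL(ι, K)) ⊆ projAut (polyMap F))
    (hcomm : ∀ a b : H, Commute a b) (hpow : ∀ a : H, a ^ n = 1)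
    (hcard : Nat.card H * n = n ^ Fintype.card ι) :
    ∃ Q : GL ι K, ∀ t : ι → K, (∀ i, t i ^ n = 1) → ∃ c : K, ∀ v,
      polyMap (linearConj Q F) (t * v) = c • (t * polyMap (linearConj Q F) v) := by
  have : Nonempty ι := (Function.ne_iff.1 hF0).nonempty
  have hf0 : polyMap F ≠ 0 := fun h =>
    hF0 (polyMap_injective (h.trans (by ext; simp [polyMap])))
  obtain ⟨ρ, hρ⟩ := exists_lift_equivariantGroup (polyMap_smul hF) hf0 hH
  obtain ⟨ζ, hζ⟩ := HasEnoughRootsOfUnity.exists_primitiveRoot K n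
  obtain ⟨Q, χ, hχ⟩ := exists_diagonalization_of_pow_eq_one hζ
    (fun a => by rw [← map_pow, hpow, map_one]) fun a b => (hcomm a b).map ρ
  refine ⟨Q, fun t ht => ?_⟩
  have hinj : Function.Injective fun a => ProjGenLinGroup.mk (ρ a) := fun a b hab =>
    Subtype.ext (by simpa only [hρ] using hab)
  obtain ⟨a, ω, haω⟩ := exists_eq_smul_of_natCard_mul_eq hcard hinj hχ
    fun i => rootsOfUnity.mkOfPowEq (t i) (ht i)
  let x : ι → K := fun i => ((χ a i).val : K)
  let w : K := (ω.val : K)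
  have htx : t = w • x := by
    ext i
    simpa using congrArg (fun z : rootsOfUnity n K => (z.val : K)) (congrFun haω i)
  refine ⟨w, fun v => ?_⟩
  rw [htx, smul_mul_assoc, polyMap_smul (isHomogeneous_linearConj hF),
    polyMap_linearConj_mul (hρ a).1 (hχ a), smul_mul_assoc, smul_smul, pow_two]

theorem stmt8_general {n r : ℕ} (hn : 3 ≤ n) [HasEnoughRootsOfUnity K n]
    (hι : Fintype.card ι = r + 1) (hr : 2 ≤ r) {F : ι → MvPolynomial ι K}
    (hF : ∀ i, (F i).IsHomogeneous 2) {H : Subgroup PGL(ι, K)}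
    (hH : (H : Set PGL(ι, K)) ⊆ projAut (polyMap F))
    (hiso : Nonempty (H ≃* (Fin r → Multiplicative (ZMod n)))) :
    ¬ LinearIndependent K F ∨
      ∃ (L : MvPolynomial ι K) (L' : ι → MvPolynomial ι K), L.IsHomogeneous 1 ∧
        (∀ i, (L' i).IsHomogeneous 1) ∧ ∀ i, F i = L * L' i := by
  refine or_iff_not_imp_left.2 fun hli => ?_
  rw [not_not] at hli
  have : NeZero n := ⟨by omega⟩
  have : Nonempty ι := Fintype.card_pos_iff.1 (by omega)
  obtain ⟨e⟩ := hiso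
  have hF0 : F ≠ 0 := fun h => hli.ne_zero (Classical.arbitrary ι) (congrFun h _)
  obtain ⟨Q, hQ⟩ := exists_linearConj_torus_equivariant (n := n) hF hF0 hH
    (fun a b => e.injective (by simp [mul_comm]))
    (fun a => e.injective (by ext; simp))
    (by simp [Nat.card_congr e.toEquiv, hι, pow_succ])
  obtain ⟨ζ, hζ⟩ := HasEnoughRootsOfUnity.exists_primitiveRoot K n
  obtain ⟨u, c, hu, hG⟩ := exists_eq_monomial_add_single (by omega) two_ne_zero hn
    (isHomogeneous_linearConj hF) (linearConj_ne_zero hli)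
    fun i i' m m' => modEq_of_forall_torus hζ hQ
  have hGmul : linearConj Q F = fun i => monomial u 1 * (C (c i) * X i) := by
    ext1 i
    rw [hG, C_mul_X_eq_monomial, monomial_mul, one_mul]
  have hu1 : (monomial u (1 : K)).IsHomogeneous 1 := isHomogeneous_monomial _ (by omega)
  refine ⟨bind₁ Q⁻¹.val.toMvPolynomial (monomial u 1),
    linearConj Q⁻¹ fun i => C (c i) * X i,
    hu1.aeval _ Q⁻¹.val.toMvPolynomial_isHomogeneous,
    isHomogeneous_linearConj fun i => isHomogeneous_C_mul_X _ _, fun i => ?_⟩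
  rw [← linearConj_mul, ← hGmul, linearConj_inv_linearConj]

end Main

/-- `finTwoArrowEquiv` as a multiplicative isomorphism, to pass between the two ways to
write `(ℤ/p)²`. -/
def finTwoArrowMulEquiv (M : Type*) [Mul M] : (Fin 2 → M) ≃* M × M where
  toEquiv := finTwoArrowEquiv M
  map_mul' _ _ := rfl

theorem stmt8 {K : Type*} [Field K] [IsAlgClosed K] [CharZero K]
    (p : ℕ) (hp : p.Prime) (hp3 : 3 ≤ p)
    (F : Fin 3 → MvPolynomial (Fin 3) K)
    (hhom : ∀ i, (F i).IsHomogeneous 2) (hne : F ≠ 0)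
    (H : Subgroup (PGL3 K))
    (hsub : (H : Set (PGL3 K)) ⊆ AutQ (fun v j => MvPolynomial.eval v (F j)))
    (hiso : Nonempty (H ≃* (Multiplicative (ZMod p) × Multiplicative (ZMod p)))) :
    ¬ AlgebraicIndependent K F ∨
      ∃ L L₀ L₁ L₂ : MvPolynomial (Fin 3) K,
        L.IsHomogeneous 1 ∧ L₀.IsHomogeneous 1 ∧ L₁.IsHomogeneous 1 ∧ L₂.IsHomogeneous 1 ∧
        F 0 = L * L₀ ∧ F 1 = L * L₁ ∧ F 2 = L * L₂ := by
  have : NeZero (p : K) := ⟨Nat.cast_ne_zero.2 hp.ne_zero⟩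
  exact (stmt8_general (r := 2) hp3 (by simp) le_rfl hhom hsub
    (hiso.map fun e => e.trans (finTwoArrowMulEquiv _).symm)).imp
    (mt AlgebraicIndependent.linearIndependent)
    fun ⟨L, L', hL, hL', hF⟩ =>
      ⟨L, L' 0, L' 1, L' 2, hL, hL' 0, hL' 1, hL' 2, hF 0, hF 1, hF 2⟩
end
end

section
/- Let K be an algebraically closed field of characteristic 0 and, for d, e ∈ K with d ≠ 0 and e ≠ 0, let f_{d,e} : K³ → K³ be the polynomial map f_{d,e}(X,Y,Z) = (X² + Y² − Z², dXY, eXZ). Then: (i) if d ≠ e, Aut(f_{d,e}) is exactly the group 𝒢₂,₂ = {[diag(1,ε₁,ε₂)] : ε₁, ε₂ ∈ {1,−1}} of order 4, isomorphic to C₂ × C₂; (ii) if d = e, Aut(f_{d,e}) is exactly the set of classes of matrices of the two shapes [[1,0,0],[0,α,β],[0,β,α]] and [[1,0,0],[0,α,β],[0,−β,−α]] with α² − β² = 1, a group isomorphic to the semidirect product Kˣ ⋊ C₂; (iii) for d', e' ∈ K nonzero, the triples f_{d,e} and f_{d',e'} are PGL₃(K)-conjugate if and only if {d,e} = {d',e'}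 as unordered pairs. -/
open Matrix MvPolynomial
open scoped Classical

noncomputable section

/-! Writing `K³ = K ⊕ K²`, `Q = Y² - Z²` and `D = diag(d, e)`, the map is
`f_{d,e}(x, w) = (x² + Q(w), x • D w)`. Every vector killed by `f_{d,e}` has `x = 0`, and the
vectors `(0, 1, ±1)`, killed by `f_{d',e'}`, span the plane `x = 0`; hence an `M` with
`f_{d,e} ∘ M = c · M ∘ f_{d',e'}` preserves this plane, and then also the line `w = 0`, because
`f_{d',e'}(0, 1, 0) = (1, 0, 0)`. So `M = c ⊕ A`, and such a matrix intertwines the two maps exactly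
when `Q ∘ A = c² Q` and `D A = A D'`. The similitudes of `Q` are the matrices `[[α, β], [±β, ±α]]`,
for which `D A = A D'` means that `D = D'` unless `α = 0`, and that `D` is `D'` with its entries
swapped unless `β = 0`. For `d = e` the second condition is empty for automorphisms and leaves the
isometry group of `Q`, which is `Kˣ ⋊ C₂` through `l = α + β`. -/

section

variable {K : Type*} [Field K]

/-- The split quadratic form `Y² - Z²` on `K²`. -/
def splitForm (w : Fin 2 → K) : K := w 0 ^ 2 - w 1 ^ 2

/-- The quadratic map `f_{d,e} = (X² + Y² - Z², dXY, eXZ)` of `K³`. -/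
def quadMap (d e : K) (v : Fin 3 → K) : Fin 3 → K :=
  ![v 0 ^ 2 + v 1 ^ 2 - v 2 ^ 2, d * (v 0 * v 1), e * (v 0 * v 2)]

/-- The relation `F ∘ M = c · M ∘ F'` underlying both automorphisms and conjugacy of polynomial
self-maps of `K³`. -/
def Intertwines (M : Matrix (Fin 3) (Fin 3) K) (c : K) (F F' : (Fin 3 → K) → Fin 3 → K) : Prop :=
  ∀ v, F (M *ᵥ v) = c • (M *ᵥ F' v)

/-- The block-diagonal matrix `c ⊕ A` acting on `K³ = K ⊕ K²`. -/
def blockMatrix (c : K) (A : Matrix (Fin 2) (Fin 2) K) : Matrix (Fin 3) (Fin 3) K :=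
  !![c, 0, 0; 0, A 0 0, A 0 1; 0, A 1 0, A 1 1]

/-- The linear endomorphism `A` of `K²` multiplies the form `Y² - Z²` by `μ`; for `μ = 1` this
describes the orthogonal group `O(1,1)`. -/
def IsSimilitude (A : Matrix (Fin 2) (Fin 2) K) (μ : K) : Prop :=
  ∀ w, splitForm (A *ᵥ w) = μ * splitForm w

/-- The general shape of a similitude of `Y² - Z²`: here `s = ±1` is the sign distinguishing the
proper similitudes from the improper ones. -/
def hypMatrix (α β s : K) : Matrix (Fin 2) (Fin 2) K :=
  !![α, β; s * β, s * α]

section ProjectiveClasses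

lemma mk_eq_toPGL3 (M : GL (Fin 3) K) :
    (QuotientGroup.mk M : PGL3 K) = toPGL3 (M : Matrix (Fin 3) (Fin 3) K) := by
  rw [toPGL3, dif_pos M.det_ne_zero]
  congr 1
  exact Units.ext rfl

lemma toPGL3_smul_s10 {a : K} (ha : a ≠ 0) (N : Matrix (Fin 3) (Fin 3) K) :
    toPGL3 (a • N) = toPGL3 N := by
  by_cases hN : N.det = 0
  · simp [toPGL3, hN]
  · have haN : (a • N).det ≠ 0 := by simp [ha, hN]
    rw [toPGL3, toPGL3, dif_pos haN, dif_pos hN, eq_comm, QuotientGroup.eq,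
      GeneralLinearGroup.mem_center_iff_val_mem_range_scalar]
    refine ⟨a, ?_⟩
    have hinv : ((GeneralLinearGroup.mkOfDetNeZero N hN)⁻¹ : GL (Fin 3) K).val * N = 1 :=
      (GeneralLinearGroup.mkOfDetNeZero N hN).inv_mul
    change scalar (Fin 3) a = ((GeneralLinearGroup.mkOfDetNeZero N hN)⁻¹).val * (a • N)
    rw [Matrix.mul_smul, hinv, smul_one_eq_diagonal, scalar_apply]

lemma mem_autQ_iff {F : (Fin 3 → K) → Fin 3 → K} {x : PGL3 K} :
    x ∈ AutQ F ↔ ∃ (M : Matrix (Fin 3) (Fin 3) K) (c : K),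
      M.det ≠ 0 ∧ c ≠ 0 ∧ Intertwines M c F F ∧ toPGL3 M = x := by
  constructor
  · rintro ⟨M, hx, c, hc, hM⟩
    exact ⟨M, c, M.det_ne_zero, hc, hM, by rw [← mk_eq_toPGL3, hx]⟩
  · rintro ⟨M, c, hdet, hc, hM, hx⟩
    exact ⟨GeneralLinearGroup.mkOfDetNeZero M hdet, by rw [mk_eq_toPGL3]; exact hx, c, hc, hM⟩

end ProjectiveClasses

section BlockMatrices

lemma blockMatrix_mulVec_vecCons (c x : K) (A : Matrix (Fin 2) (Fin 2) K) (w : Fin 2 → K) :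
    blockMatrix c A *ᵥ vecCons x w = vecCons (c * x) (A *ᵥ w) := by
  ext i
  fin_cases i <;> simp [blockMatrix, mulVec, dotProduct, Fin.sum_univ_succ]

lemma det_blockMatrix (c : K) (A : Matrix (Fin 2) (Fin 2) K) :
    (blockMatrix c A).det = c * A.det := by
  simp only [blockMatrix, det_fin_three, det_fin_two, of_apply, cons_val]
  ring

lemma smul_blockMatrix (a c : K) (A : Matrix (Fin 2) (Fin 2) K) :
    a • blockMatrix c A = blockMatrix (a * c) (a • A) := by
  ext i j
  fin_cases i <;> fin_cases j <;> simp [blockMatrix]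

/-- The embedding `A ↦ 1 ⊕ A` of matrix algebras, as a multiplicative map. -/
def blockMonoidHom : Matrix (Fin 2) (Fin 2) K →* Matrix (Fin 3) (Fin 3) K where
  toFun := blockMatrix 1
  map_one' := by
    ext i j
    fin_cases i <;> fin_cases j <;> simp [blockMatrix]
  map_mul' A B := by
    ext i j
    fin_cases i <;> fin_cases j <;> simp [blockMatrix, mul_apply, Fin.sum_univ_succ]

/-- The embedding `A ↦ [1 ⊕ A]` of `GL₂(K)` into `PGL₃(K)`. -/
def blockPGL : GL (Fin 2) K →* PGL3 K :=
  (QuotientGroup.mk' _).comp (Units.map blockMonoidHom)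

lemma blockPGL_apply (A : GL (Fin 2) K) :
    blockPGL A = toPGL3 (blockMatrix 1 (A : Matrix (Fin 2) (Fin 2) K)) :=
  mk_eq_toPGL3 _

lemma blockPGL_injective : Function.Injective (blockPGL (K := K)) := by
  rw [injective_iff_map_eq_one]
  intro A hA
  obtain ⟨a, ha⟩ := GeneralLinearGroup.mem_center_iff_val_mem_range_scalar.1
    ((QuotientGroup.eq_one_iff _).1 hA)
  replace ha : scalar (Fin 3) a = blockMatrix 1 A.val := ha
  obtain rfl : a = 1 := by simpa [blockMatrix] using congrFun₂ ha 0 0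
  ext i j
  have hij := congrFun₂ ha i.succ j.succ
  fin_cases i <;> fin_cases j <;> simpa [blockMatrix, eq_comm] using hij

end BlockMatrices

section Similitudes

lemma det_hypMatrix (α β s : K) : (hypMatrix α β s).det = s * (α ^ 2 - β ^ 2) := by
  rw [hypMatrix, det_fin_two_of]
  ring

lemma diagonal_mul_hypMatrix_eq_iff {s : K} (hs : s ^ 2 = 1) {α β d e d' e' : K} :
    diagonal ![d, e] * hypMatrix α β s = hypMatrix α β s * diagonal ![d', e'] ↔
      (d = d' ∧ e = e' ∨ α = 0) ∧ (d = e' ∧ e = d' ∨ β = 0) := by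
  have hs₀ : s ≠ 0 := (IsUnit.of_pow_eq_one hs two_ne_zero).ne_zero
  simp only [← Matrix.ext_iff, Fin.forall_fin_two, diagonal_mul, mul_diagonal, hypMatrix, of_apply,
    cons_val]
  grind

lemma isSimilitude_hypMatrix {α β s μ : K} (hs : s ^ 2 = 1) (hαβ : α ^ 2 - β ^ 2 = μ) :
    IsSimilitude (hypMatrix α β s) μ := by
  intro w
  simp only [splitForm, hypMatrix, mulVec, dotProduct, Fin.sum_univ_two, of_apply, cons_val]
  linear_combination (w 0 ^ 2 - w 1 ^ 2) * hαβ - (β * w 0 + α * w 1) ^ 2 * hs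

lemma IsSimilitude.smul {A : Matrix (Fin 2) (Fin 2) K} {μ : K} (hA : IsSimilitude A μ) (a : K) :
    IsSimilitude (a • A) (a ^ 2 * μ) := by
  intro w
  have h := hA w
  simp only [splitForm, smul_mulVec, Pi.smul_apply, smul_eq_mul] at h ⊢
  linear_combination a ^ 2 * h

variable [NeZero (2 : K)]

lemma IsSimilitude.exists_eq_hypMatrix {A : Matrix (Fin 2) (Fin 2) K} {μ : K}
    (hA : IsSimilitude A μ) (hμ : μ ≠ 0) :
    ∃ α β s : K, s ^ 2 = 1 ∧ α ^ 2 - β ^ 2 = μ ∧ A = hypMatrix α β s := by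
  have h₁ := hA ![1, 0]
  have h₂ := hA ![0, 1]
  have h₃ := hA ![1, 1]
  simp only [splitForm, mulVec, dotProduct, Fin.sum_univ_two, cons_val_zero, cons_val_one]
    at h₁ h₂ h₃
  have horth : A 0 0 * A 0 1 = A 1 0 * A 1 1 := by
    refine mul_left_cancel₀ (two_ne_zero' K) ?_
    linear_combination h₃ - h₁ - h₂
  have hdet : (A.det / μ) ^ 2 = 1 := by
    rw [div_pow, div_eq_one_iff_eq (pow_ne_zero 2 hμ), det_fin_two]
    linear_combination (A 1 1 ^ 2 - A 0 1 ^ 2) * h₁ - μ * h₂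
      + (A 0 0 * A 0 1 - A 1 0 * A 1 1) * horth
  have h₁₀ : A 1 0 = A.det / μ * A 0 1 := by
    rw [det_fin_two]
    field_simp
    linear_combination A 1 0 * h₂ - A 1 1 * horth
  have h₁₁ : A 1 1 = A.det / μ * A 0 0 := by
    rw [det_fin_two]
    field_simp
    linear_combination A 1 0 * horth - A 1 1 * h₁
  refine ⟨A 0 0, A 0 1, A.det / μ, hdet, ?_, ?_⟩
  · linear_combination h₁ + (A 1 0 + A.det / μ * A 0 1) * h₁₀ + A 0 1 ^ 2 * hdet
  · rw [hypMatrix, ← h₁₀, ← h₁₁]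
    exact eta_fin_two A

lemma IsSimilitude.det_ne_zero {A : Matrix (Fin 2) (Fin 2) K} {μ : K} (hA : IsSimilitude A μ)
    (hμ : μ ≠ 0) : A.det ≠ 0 := by
  obtain ⟨α, β, s, hs, rfl, rfl⟩ := hA.exists_eq_hypMatrix hμ
  rw [det_hypMatrix]
  exact mul_ne_zero (IsUnit.of_pow_eq_one hs two_ne_zero).ne_zero hμ

end Similitudes

section Intertwining

lemma quadMap_vecCons (d e x : K) (w : Fin 2 → K) :
    quadMap d e (vecCons x w) = vecCons (x ^ 2 + splitForm w) (x • diagonal ![d, e] *ᵥ w) := by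
  ext i
  fin_cases i
  · simp [quadMap, splitForm, add_sub_assoc]
  · simp [quadMap, mul_left_comm]
  · simp [quadMap, mul_left_comm]

lemma apply_zero_eq_zero_of_quadMap_eq_zero {d e : K} (hd : d ≠ 0) (he : e ≠ 0) {v : Fin 3 → K}
    (hv : quadMap d e v = 0) : v 0 = 0 := by
  by_contra h
  have h₁ : v 1 = 0 := by simpa [quadMap, hd, h] using congrFun hv 1
  have h₂ : v 2 = 0 := by simpa [quadMap, he, h] using congrFun hv 2
  simpa [quadMap, h₁, h₂, h] using congrFun hv 0

lemma intertwines_blockMatrix_iff {c : K} (hc : c ≠ 0) (A : Matrix (Fin 2) (Fin 2) K)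
    (d e d' e' : K) :
    Intertwines (blockMatrix c A) c (quadMap d e) (quadMap d' e') ↔
      IsSimilitude A (c ^ 2) ∧ diagonal ![d, e] * A = A * diagonal ![d', e'] := by
  have key (x : K) (w : Fin 2 → K) :
      quadMap d e (blockMatrix c A *ᵥ vecCons x w) =
          c • (blockMatrix c A *ᵥ quadMap d' e' (vecCons x w)) ↔
        splitForm (A *ᵥ w) = c ^ 2 * splitForm w ∧
          x • (diagonal ![d, e] * A) *ᵥ w = x • (A * diagonal ![d', e']) *ᵥ w := by
    rw [quadMap_vecCons, blockMatrix_mulVec_vecCons, blockMatrix_mulVec_vecCons, quadMap_vecCons,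
      smul_cons, mulVec_mulVec, mulVec_smul, mulVec_mulVec, vecCons_inj, mul_smul,
      smul_right_inj hc]
    refine and_congr_left' ⟨fun h ↦ ?_, fun h ↦ ?_⟩
    · simp only [smul_eq_mul] at h
      linear_combination h
    · simp only [smul_eq_mul]
      linear_combination h
  constructor
  · intro h
    refine ⟨fun w ↦ ((key 0 w).1 (h _)).1, ext_of_mulVec_single fun i ↦ ?_⟩
    simpa only [one_smul] using ((key 1 _).1 (h _)).2
  · rintro ⟨hA, hcomm⟩ v
    rw [← cons_head_tail v, key, hcomm]
    exact ⟨hA _, rfl⟩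

variable [NeZero (2 : K)] {d e d' e' : K} {M : Matrix (Fin 3) (Fin 3) K} {c : K}

lemma Intertwines.row_zero (hd : d ≠ 0) (he : e ≠ 0)
    (h : Intertwines M c (quadMap d e) (quadMap d' e')) : M 0 1 = 0 ∧ M 0 2 = 0 := by
  have base {v : Fin 3 → K} (hv : quadMap d' e' v = 0) : (M *ᵥ v) 0 = 0 :=
    apply_zero_eq_zero_of_quadMap_eq_zero hd he (by rw [h v, hv, mulVec_zero, smul_zero])
  have hplus : M 0 1 + M 0 2 = 0 := by
    simpa [mulVec, dotProduct, Fin.sum_univ_three] using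
      base (v := ![0, 1, 1]) (by ext i; fin_cases i <;> simp [quadMap])
  have hminus : M 0 1 - M 0 2 = 0 := by
    simpa [mulVec, dotProduct, Fin.sum_univ_three, sub_eq_add_neg] using
      base (v := ![0, 1, -1]) (by ext i; fin_cases i <;> simp [quadMap])
  constructor <;> refine mul_left_cancel₀ (two_ne_zero' K) ?_
  · linear_combination hplus + hminus
  · linear_combination hplus - hminus

lemma Intertwines.exists_eq_blockMatrix (hd : d ≠ 0) (he : e ≠ 0) (hM : M.det ≠ 0) (hc : c ≠ 0)
    (h : Intertwines M c (quadMap d e) (quadMap d' e')) : ∃ A, M = blockMatrix c A := by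
  obtain ⟨h₀₁, h₀₂⟩ := h.row_zero hd he
  have hy := h ![0, 1, 0]
  have hx := h ![1, 0, 0]
  have h₁₀ : M 1 0 = 0 := by
    simpa [quadMap, mulVec, dotProduct, Fin.sum_univ_three, h₀₁, hc, eq_comm] using congrFun hy 1
  have h₂₀ : M 2 0 = 0 := by
    simpa [quadMap, mulVec, dotProduct, Fin.sum_univ_three, h₀₁, hc, eq_comm] using congrFun hy 2
  have h₀₀ : M 0 0 ≠ 0 := fun h₀₀ ↦ hM (by simp [det_fin_three, h₀₀, h₀₁, h₀₂])
  have hMc : M 0 0 = c := by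
    refine mul_right_cancel₀ h₀₀ ?_
    simpa [quadMap, mulVec, dotProduct, Fin.sum_univ_three, h₁₀, h₂₀, sq] using congrFun hx 0
  refine ⟨!![M 1 1, M 1 2; M 2 1, M 2 2], ?_⟩
  ext i j
  fin_cases i <;> fin_cases j <;> simp [blockMatrix, h₀₁, h₀₂, h₁₀, h₂₀, hMc]

lemma pglConj_quadMap_iff_exists (hd : d ≠ 0) (he : e ≠ 0) :
    PGLConj (quadMap d e) (quadMap d' e') ↔
      ∃ (A : Matrix (Fin 2) (Fin 2) K) (c : K), c ≠ 0 ∧ IsSimilitude A (c ^ 2) ∧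
        diagonal ![d, e] * A = A * diagonal ![d', e'] := by
  constructor
  · rintro ⟨M, c, hM, hc, h⟩
    obtain ⟨A, rfl⟩ := Intertwines.exists_eq_blockMatrix hd he hM hc h
    exact ⟨A, c, hc, (intertwines_blockMatrix_iff hc A d e d' e').1 h⟩
  · rintro ⟨A, c, hc, hA, hcomm⟩
    refine ⟨blockMatrix c A, c, ?_, hc,
      (intertwines_blockMatrix_iff hc A d e d' e').2 ⟨hA, hcomm⟩⟩
    rw [det_blockMatrix]
    exact mul_ne_zero hc (hA.det_ne_zero (pow_ne_zero 2 hc))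

lemma mem_autQ_quadMap_iff (hd : d ≠ 0) (he : e ≠ 0) {x : PGL3 K} :
    x ∈ AutQ (quadMap d e) ↔
      ∃ A : Matrix (Fin 2) (Fin 2) K, IsSimilitude A 1 ∧
        diagonal ![d, e] * A = A * diagonal ![d, e] ∧ toPGL3 (blockMatrix 1 A) = x := by
  rw [mem_autQ_iff]
  constructor
  · rintro ⟨M, c, hM, hc, h, rfl⟩
    obtain ⟨A, rfl⟩ := h.exists_eq_blockMatrix hd he hM hc
    obtain ⟨hA, hcomm⟩ := (intertwines_blockMatrix_iff hc A d e d e).1 h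
    refine ⟨c⁻¹ • A, ?_, by rw [Matrix.mul_smul, hcomm, Matrix.smul_mul], ?_⟩
    · simpa [hc] using hA.smul c⁻¹
    · rw [← toPGL3_smul_s10 hc, smul_blockMatrix, mul_one, smul_inv_smul₀ hc]
  · rintro ⟨A, hA, hcomm, rfl⟩
    refine ⟨blockMatrix 1 A, 1, ?_, one_ne_zero, ?_, rfl⟩
    · simpa [det_blockMatrix] using hA.det_ne_zero one_ne_zero
    · rw [intertwines_blockMatrix_iff one_ne_zero, one_pow]
      exact ⟨hA, hcomm⟩

end Intertwining

section OrthogonalGroup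

lemma hypMatrix_mul_hypMatrix (α β s α' β' : K) {s' : K} (hs' : s' ^ 2 = 1) :
    hypMatrix α β s * hypMatrix α' β' s' =
      hypMatrix (α * α' + s' * (β * β')) (α * β' + s' * (β * α')) (s * s') := by
  ext i j
  fin_cases i <;> fin_cases j <;>
    simp only [Fin.zero_eta, Fin.mk_one, hypMatrix, mul_apply, Fin.sum_univ_two, of_apply, cons_val]
  · ring
  · ring
  · linear_combination -s * β * α' * hs'
  · linear_combination -s * β * β' * hs'

lemma hypMatrix_one_zero_one : hypMatrix (1 : K) 0 1 = 1 := by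
  simp [hypMatrix, one_fin_two]

lemma hypMatrix_one_zero_neg_one_mul_self :
    hypMatrix (1 : K) 0 (-1) * hypMatrix 1 0 (-1) = 1 := by
  rw [hypMatrix_mul_hypMatrix _ _ _ _ _ (by ring)]
  simp [hypMatrix_one_zero_one]

/-- The reflection `(Y, Z) ↦ (Y, -Z)`. -/
def reflection (K : Type*) [Field K] : GL (Fin 2) K where
  val := hypMatrix 1 0 (-1)
  inv := hypMatrix 1 0 (-1)
  val_inv := hypMatrix_one_zero_neg_one_mul_self
  inv_val := hypMatrix_one_zero_neg_one_mul_self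

lemma reflection_sq : reflection K ^ 2 = 1 := by
  rw [sq]
  exact Units.ext hypMatrix_one_zero_neg_one_mul_self

/-- The homomorphism from the cyclic group of order `n` that sends its generator to `s`. -/
def zmodPowHom {G : Type*} [Monoid G] {n : ℕ} [NeZero n] (s : G) (hs : s ^ n = 1) :
    Multiplicative (ZMod n) →* G where
  toFun z := s ^ z.toAdd.val
  map_one' := by simp
  map_mul' a b := by
    rw [toAdd_mul, ZMod.val_add, ← pow_eq_pow_mod _ hs, pow_add]

lemma zmodPowHom_two_ofAdd_one {G : Type*} [Monoid G] (s : G) (hs : s ^ 2 = 1) :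
    zmodPowHom s hs (.ofAdd 1) = s :=
  pow_one s

lemma multiplicative_zmod_two_cases (z : Multiplicative (ZMod 2)) : z = 1 ∨ z = .ofAdd 1 := by
  revert z
  decide

/-- The action of the group of order two on `Kˣ` by inversion. -/
def invAction (K : Type*) [Field K] : Multiplicative (ZMod 2) →* MulAut Kˣ :=
  zmodPowHom (MulEquiv.inv Kˣ) (by ext x; simp [sq])

/-- The algebraic hyperbolic cosine: `cosh t` as a rational function of `l = exp t`. -/
def unitCosh (l : Kˣ) : K := ((l : K) + (l : K)⁻¹) / 2

/-- The algebraic hyperbolic sine: `sinh t` as a rational function of `l = exp t`. -/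
def unitSinh (l : Kˣ) : K := ((l : K) - (l : K)⁻¹) / 2

lemma unitSinh_one : unitSinh (1 : Kˣ) = 0 := by
  simp [unitSinh]

lemma unitCosh_inv (l : Kˣ) : unitCosh l⁻¹ = unitCosh l := by
  simp [unitCosh, add_comm]

lemma unitSinh_inv (l : Kˣ) : unitSinh l⁻¹ = -unitSinh l := by
  simp [unitSinh, ← neg_div]

variable [NeZero (2 : K)]

lemma unitCosh_mul (l m : Kˣ) :
    unitCosh (l * m) = unitCosh l * unitCosh m + unitSinh l * unitSinh m := by
  have hl := l.ne_zero
  have hm := m.ne_zero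
  have h2 := two_ne_zero' K
  simp only [unitCosh, unitSinh, Units.val_mul]
  field_simp
  ring

lemma unitSinh_mul (l m : Kˣ) :
    unitSinh (l * m) = unitCosh l * unitSinh m + unitSinh l * unitCosh m := by
  have hl := l.ne_zero
  have hm := m.ne_zero
  have h2 := two_ne_zero' K
  simp only [unitCosh, unitSinh, Units.val_mul]
  field_simp
  ring

lemma unitCosh_add_unitSinh (l : Kˣ) : unitCosh l + unitSinh l = l := by
  have h2 := two_ne_zero' K
  simp only [unitCosh, unitSinh]
  field_simp
  ring

lemma unitCosh_one : unitCosh (1 : Kˣ) = 1 := by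
  simp [unitCosh, one_add_one_eq_two, div_self (two_ne_zero' K)]

lemma unitCosh_sq_sub_unitSinh_sq (l : Kˣ) : unitCosh l ^ 2 - unitSinh l ^ 2 = 1 := by
  have h := unitCosh_mul l l⁻¹
  rw [mul_inv_cancel, unitCosh_one, unitCosh_inv, unitSinh_inv] at h
  linear_combination -h

lemma exists_unitCosh_unitSinh_eq {α β : K} (h : α ^ 2 - β ^ 2 = 1) :
    ∃ l : Kˣ, unitCosh l = α ∧ unitSinh l = β := by
  have h2 := two_ne_zero' K
  have hmul : (α + β) * (α - β) = 1 := by linear_combination h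
  refine ⟨⟨α + β, α - β, hmul, by rw [mul_comm, hmul]⟩, ?_, ?_⟩ <;>
    simp only [unitCosh, unitSinh, inv_eq_of_mul_eq_one_right hmul] <;> field_simp <;> ring

/-- The hyperbolic rotations of the plane, as a one-parameter subgroup of `GL₂(K)`. -/
def boostHom (K : Type*) [Field K] [NeZero (2 : K)] : Kˣ →* GL (Fin 2) K :=
  MonoidHom.toHomUnits
    { toFun l := hypMatrix (unitCosh l) (unitSinh l) 1
      map_one' := by rw [unitCosh_one, unitSinh_one, hypMatrix_one_zero_one]
      map_mul' l m := by
        rw [hypMatrix_mul_hypMatrix _ _ _ _ _ (one_pow 2), unitCosh_mul, unitSinh_mul]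
        simp only [one_mul] }

lemma coe_boostHom (l : Kˣ) :
    (boostHom K l : Matrix (Fin 2) (Fin 2) K) = hypMatrix (unitCosh l) (unitSinh l) 1 :=
  rfl

lemma coe_boostHom_mul_reflection (l : Kˣ) :
    (boostHom K l * reflection K : GL (Fin 2) K).val =
      hypMatrix (unitCosh l) (-unitSinh l) (-1) := by
  rw [Units.val_mul, coe_boostHom, reflection, hypMatrix_mul_hypMatrix _ _ _ _ _ (by ring)]
  simp

lemma reflection_mul_boostHom (l : Kˣ) :
    reflection K * boostHom K l = boostHom K l⁻¹ * reflection K := by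
  refine Units.ext ?_
  rw [coe_boostHom_mul_reflection, Units.val_mul, coe_boostHom, reflection,
    hypMatrix_mul_hypMatrix _ _ _ _ _ (one_pow 2), unitCosh_inv, unitSinh_inv]
  simp

/-- The parametrization of the orthogonal group `O(1,1)` of `Y² - Z²` by `Kˣ ⋊ C₂`. -/
def orthogonalHom (K : Type*) [Field K] [NeZero (2 : K)] :
    Kˣ ⋊[invAction K] Multiplicative (ZMod 2) →* GL (Fin 2) K :=
  SemidirectProduct.lift (boostHom K) (zmodPowHom (reflection K) reflection_sq) fun z ↦ by
    ext1 l
    obtain rfl | rfl := multiplicative_zmod_two_cases z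
    · simp
    · have hinv : invAction K (.ofAdd 1) l = l⁻¹ := by
        rw [invAction, zmodPowHom_two_ofAdd_one, MulEquiv.inv_apply]
      rw [zmodPowHom_two_ofAdd_one, MonoidHom.comp_apply, MonoidHom.comp_apply,
        MulEquiv.coe_toMonoidHom, MulEquiv.coe_toMonoidHom, MulAut.conj_apply, hinv,
        reflection_mul_boostHom, mul_inv_cancel_right]

lemma orthogonalHom_mk_one (l : Kˣ) : orthogonalHom K ⟨l, 1⟩ = boostHom K l := by
  simp [SemidirectProduct.mk_eq_inl_mul_inr, orthogonalHom]

lemma orthogonalHom_mk_ofAdd_one (l : Kˣ) :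
    orthogonalHom K ⟨l, .ofAdd 1⟩ = boostHom K l * reflection K := by
  rw [SemidirectProduct.mk_eq_inl_mul_inr, map_mul, orthogonalHom, SemidirectProduct.lift_inl,
    SemidirectProduct.lift_inr, zmodPowHom_two_ofAdd_one]

lemma orthogonalHom_injective : Function.Injective (orthogonalHom K) := by
  rw [injective_iff_map_eq_one]
  rintro ⟨l, z⟩ h
  obtain rfl | rfl := multiplicative_zmod_two_cases z
  · rw [orthogonalHom_mk_one, Units.ext_iff, coe_boostHom] at h
    have hcosh : unitCosh l = 1 := by simpa [hypMatrix] using congrFun₂ h 0 0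
    have hsinh : unitSinh l = 0 := by simpa [hypMatrix] using congrFun₂ h 0 1
    obtain rfl : l = 1 := Units.ext (by rw [← unitCosh_add_unitSinh, hcosh, hsinh, add_zero]; rfl)
    rfl
  · rw [orthogonalHom_mk_ofAdd_one, Units.ext_iff, coe_boostHom_mul_reflection] at h
    have h₀ : unitCosh l = 1 := by simpa [hypMatrix] using congrFun₂ h 0 0
    have h₁ : -unitCosh l = 1 := by simpa [hypMatrix] using congrFun₂ h 1 1
    exact absurd (by linear_combination -h₀ - h₁) (two_ne_zero' K)

lemma mem_range_orthogonalHom_iff {A : GL (Fin 2) K} :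
    A ∈ (orthogonalHom K).range ↔ IsSimilitude A.val 1 := by
  constructor
  · rintro ⟨⟨l, z⟩, rfl⟩
    obtain rfl | rfl := multiplicative_zmod_two_cases z
    · rw [orthogonalHom_mk_one, coe_boostHom]
      exact isSimilitude_hypMatrix (one_pow 2) (unitCosh_sq_sub_unitSinh_sq l)
    · rw [orthogonalHom_mk_ofAdd_one, coe_boostHom_mul_reflection]
      exact isSimilitude_hypMatrix neg_one_sq (by rw [neg_sq, unitCosh_sq_sub_unitSinh_sq])
  · intro hA
    obtain ⟨α, β, s, hs, hαβ, hA⟩ := hA.exists_eq_hypMatrix one_ne_zero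
    obtain ⟨l, rfl, hl⟩ := exists_unitCosh_unitSinh_eq (α := α) (β := s * β)
      (by linear_combination hαβ - β ^ 2 * hs)
    obtain rfl | rfl := sq_eq_one_iff.1 hs
    · refine ⟨⟨l, 1⟩, Units.ext ?_⟩
      rw [orthogonalHom_mk_one, coe_boostHom, hA, hl, one_mul]
    · refine ⟨⟨l, .ofAdd 1⟩, Units.ext ?_⟩
      rw [orthogonalHom_mk_ofAdd_one, coe_boostHom_mul_reflection, hA, hl, neg_one_mul, neg_neg]

end OrthogonalGroup

section QuadMap

variable [NeZero (2 : K)] {d e d' e' : K}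

lemma autQ_quadMap_of_ne (hd : d ≠ 0) (he : e ≠ 0) (hde : d ≠ e) :
    AutQ (quadMap d e) = {x | ∃ ε₁ ε₂ : K, (ε₁ = 1 ∨ ε₁ = -1) ∧ (ε₂ = 1 ∨ ε₂ = -1) ∧
      x = toPGL3 (diagonal ![1, ε₁, ε₂])} := by
  have hblock (α s : K) : blockMatrix 1 (hypMatrix α 0 s) = diagonal ![1, α, s * α] := by
    ext i j
    fin_cases i <;> fin_cases j <;> simp [blockMatrix, hypMatrix]
  simp only [← sq_eq_one_iff]
  ext x
  rw [mem_autQ_quadMap_iff hd he]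
  constructor
  · rintro ⟨A, hA, hcomm, rfl⟩
    obtain ⟨α, β, s, hs, hαβ, rfl⟩ := hA.exists_eq_hypMatrix one_ne_zero
    obtain rfl : β = 0 :=
      ((diagonal_mul_hypMatrix_eq_iff hs).1 hcomm).2.resolve_left fun h ↦ hde h.1
    have hα : α ^ 2 = 1 := by linear_combination hαβ
    exact ⟨α, s * α, hα, by rw [mul_pow, hs, hα, one_mul], by rw [hblock]⟩
  · rintro ⟨ε₁, ε₂, h₁, h₂, rfl⟩
    have hs : (ε₂ * ε₁) ^ 2 = 1 := by rw [mul_pow, h₁, h₂, one_mul]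
    refine ⟨hypMatrix ε₁ 0 (ε₂ * ε₁), isSimilitude_hypMatrix hs (by rw [h₁]; ring),
      (diagonal_mul_hypMatrix_eq_iff hs).2 (by simp), ?_⟩
    rw [hblock, mul_assoc, ← sq, h₁, mul_one]

lemma mem_autQ_quadMap_self_iff (hd : d ≠ 0) {x : PGL3 K} :
    x ∈ AutQ (quadMap d d) ↔
      ∃ A : Matrix (Fin 2) (Fin 2) K, IsSimilitude A 1 ∧ toPGL3 (blockMatrix 1 A) = x := by
  have hcomm (A : Matrix (Fin 2) (Fin 2) K) : diagonal ![d, d] * A = A * diagonal ![d, d] := by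
    ext i j
    fin_cases i <;> fin_cases j <;> simp [diagonal_mul, mul_diagonal, mul_comm]
  simp only [mem_autQ_quadMap_iff hd hd, hcomm, true_and]

lemma autQ_quadMap_self (hd : d ≠ 0) :
    AutQ (quadMap d d) = {x | ∃ α β : K, α ^ 2 - β ^ 2 = 1 ∧
      (x = toPGL3 !![1, 0, 0; 0, α, β; 0, β, α] ∨
        x = toPGL3 !![1, 0, 0; 0, α, β; 0, -β, -α])} := by
  have hpos (α β : K) : blockMatrix 1 (hypMatrix α β 1) = !![1, 0, 0; 0, α, β; 0, β, α] := by
    simp [blockMatrix, hypMatrix]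
  have hneg (α β : K) : blockMatrix 1 (hypMatrix α β (-1)) = !![1, 0, 0; 0, α, β; 0, -β, -α] := by
    simp [blockMatrix, hypMatrix]
  ext x
  rw [mem_autQ_quadMap_self_iff hd]
  constructor
  · rintro ⟨A, hA, rfl⟩
    obtain ⟨α, β, s, hs, hαβ, rfl⟩ := hA.exists_eq_hypMatrix one_ne_zero
    obtain rfl | rfl := sq_eq_one_iff.1 hs
    · exact ⟨α, β, hαβ, .inl (by rw [hpos])⟩
    · exact ⟨α, β, hαβ, .inr (by rw [hneg])⟩
  · rintro ⟨α, β, hαβ, rfl | rfl⟩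
    · exact ⟨hypMatrix α β 1, isSimilitude_hypMatrix (one_pow 2) hαβ, by rw [hpos]⟩
    · exact ⟨hypMatrix α β (-1), isSimilitude_hypMatrix neg_one_sq hαβ, by rw [hneg]⟩

lemma coe_range_blockPGL_comp_orthogonalHom (hd : d ≠ 0) :
    ((blockPGL.comp (orthogonalHom K)).range : Set (PGL3 K)) = AutQ (quadMap d d) := by
  ext x
  rw [mem_autQ_quadMap_self_iff hd, SetLike.mem_coe, MonoidHom.range_comp, Subgroup.mem_map]
  simp only [mem_range_orthogonalHom_iff, blockPGL_apply]
  constructor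
  · rintro ⟨A, hA⟩
    exact ⟨A.val, hA⟩
  · rintro ⟨A, hA⟩
    exact ⟨GeneralLinearGroup.mkOfDetNeZero A (hA.1.det_ne_zero one_ne_zero), hA⟩

lemma pglConj_quadMap_iff (hd : d ≠ 0) (he : e ≠ 0) :
    PGLConj (quadMap d e) (quadMap d' e') ↔
      (d = d' ∧ e = e') ∨ (IsSquare (-1 : K) ∧ d = e' ∧ e = d') := by
  rw [pglConj_quadMap_iff_exists hd he]
  constructor
  · rintro ⟨A, c, hc, hA, hcomm⟩
    obtain ⟨α, β, s, hs, hαβ, rfl⟩ := hA.exists_eq_hypMatrix (pow_ne_zero 2 hc)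
    obtain ⟨hsame | rfl, hswap⟩ := (diagonal_mul_hypMatrix_eq_iff hs).1 hcomm
    · exact .inl hsame
    · have hβ : β ≠ 0 := by
        rintro rfl
        exact hc (pow_eq_zero_iff two_ne_zero |>.1 (by linear_combination -hαβ))
      refine .inr ⟨⟨c / β, ?_⟩, hswap.resolve_right hβ⟩
      field_simp
      linear_combination hαβ
  · rintro (⟨rfl, rfl⟩ | ⟨⟨i, hi⟩, rfl, rfl⟩)
    · exact ⟨1, 1, one_ne_zero, fun w ↦ by simp, by simp⟩
    · exact ⟨hypMatrix 0 i 1, 1, one_ne_zero,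
        isSimilitude_hypMatrix (one_pow 2) (by linear_combination hi),
        (diagonal_mul_hypMatrix_eq_iff (one_pow 2)).2 (by simp)⟩

end QuadMap

theorem stmt10_general [NeZero (2 : K)] :
    (∀ d e : K, d ≠ 0 → e ≠ 0 → d ≠ e →
      AutQ (quadMap d e) =
        {x | ∃ ε₁ ε₂ : K, (ε₁ = 1 ∨ ε₁ = -1) ∧ (ε₂ = 1 ∨ ε₂ = -1) ∧
          x = toPGL3 (diagonal ![1, ε₁, ε₂])}) ∧
    (∀ d : K, d ≠ 0 →
      AutQ (quadMap d d) =
        {x | ∃ α β : K, α ^ 2 - β ^ 2 = 1 ∧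
          (x = toPGL3 !![1, 0, 0; 0, α, β; 0, β, α] ∨
            x = toPGL3 !![1, 0, 0; 0, α, β; 0, -β, -α])} ∧
      ∃ (H : Subgroup (PGL3 K)) (ψ : Multiplicative (ZMod 2) →* MulAut Kˣ),
        (H : Set (PGL3 K)) = AutQ (quadMap d d) ∧
        Nonempty (H ≃* (Kˣ ⋊[ψ] Multiplicative (ZMod 2)))) ∧
    (∀ d e d' e' : K, d ≠ 0 → e ≠ 0 →
      (PGLConj (quadMap d e) (quadMap d' e') ↔
        (d = d' ∧ e = e') ∨ (IsSquare (-1 : K) ∧ d = e' ∧ e = d'))) := by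
  have hinj : Function.Injective (blockPGL.comp (orthogonalHom K)) :=
    blockPGL_injective.comp orthogonalHom_injective
  exact ⟨fun d e ↦ autQ_quadMap_of_ne,
    fun d hd ↦ ⟨autQ_quadMap_self hd, (blockPGL.comp (orthogonalHom K)).range, invAction K,
      coe_range_blockPGL_comp_orthogonalHom hd, ⟨(MonoidHom.ofInjective hinj).symm⟩⟩,
    fun d e d' e' ↦ pglConj_quadMap_iff⟩

end

theorem stmt10 {K : Type*} [Field K] [IsAlgClosed K] [CharZero K] :
    let f : K → K → (Fin 3 → K) → (Fin 3 → K) := fun d e v =>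
      ![v 0 ^ 2 + v 1 ^ 2 - v 2 ^ 2, d * (v 0 * v 1), e * (v 0 * v 2)]
    (∀ d e : K, d ≠ 0 → e ≠ 0 → d ≠ e →
      AutQ (f d e) =
        {x | ∃ ε₁ ε₂ : K, (ε₁ = 1 ∨ ε₁ = -1) ∧ (ε₂ = 1 ∨ ε₂ = -1) ∧
          x = toPGL3 (Matrix.diagonal ![1, ε₁, ε₂])}) ∧
    (∀ d e : K, d ≠ 0 → e ≠ 0 → d = e →
      AutQ (f d e) =
        {x | ∃ α β : K, α ^ 2 - β ^ 2 = 1 ∧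
          (x = toPGL3 !![1,0,0; 0,α,β; 0,β,α] ∨
            x = toPGL3 !![1,0,0; 0,α,β; 0,-β,-α])} ∧
      ∃ (H : Subgroup (PGL3 K)) (ψ : Multiplicative (ZMod 2) →* MulAut Kˣ),
        (H : Set (PGL3 K)) = AutQ (f d e) ∧
        Nonempty (H ≃* (Kˣ ⋊[ψ] Multiplicative (ZMod 2)))) ∧
    (∀ d e d' e' : K, d ≠ 0 → e ≠ 0 → d' ≠ 0 → e' ≠ 0 →
      (PGLConj (f d e) (f d' e') ↔ (d = d' ∧ e = e') ∨ (d = e' ∧ e = d'))) := by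
  intro f
  obtain ⟨hne, heq, hconj⟩ := stmt10_general (K := K)
  have hsq : IsSquare (-1 : K) := IsAlgClosed.exists_eq_mul_self _
  simp only [hsq, true_and] at hconj
  exact ⟨hne, fun d e hd _ hde ↦ hde ▸ heq d hd,
    fun d e d' e' hd he _ _ ↦ hconj d e d' e' hd he⟩
end
end
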